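/- arXiv:2007.06148 — 3 statements merged into one kernel-verified Lean document; each statement's English description precedes it below -/
import Mathlib

section
/- If z* ∈ F satisfies MPSC piecewise CRSC, then the MPSC local error bound holds in a neighborhood of z*: there exist a neighborhood V of z* and α > 0 such that dist(z, F) ≤ α(Σ_{i=1}^p max{g_i(z),0} + Σ_{j=1}^q |h_j(z)| + Σ_{i=1}^m min{|G_i(z)|, |H_i(z)|}) for all z ∈ V. -/
open scoped Classical InnerProductSpace
open Filter Topology

noncomputable section

/-- Euclidean space `ℝⁿ`. -/
abbrev Euc (n : ℕ) : Type := EuclideanSpace ℝ (Fin n)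

/-- Data of a mathematical program with switching constraints (MPSC):
`min f(z)` s.t. `g(z) ≤ 0`, `h(z) = 0`, `Gᵢ(z)Hᵢ(z) = 0 (i = 1,…,m)`,
with all defining functions continuously differentiable (gradients `f'`, `g'`, … are
genuine gradient maps, and they are continuous). -/
structure MPSC (n p q m : ℕ) where
  f : Euc n → ℝ
  g : Fin p → Euc n → ℝ
  h : Fin q → Euc n → ℝ
  G : Fin m → Euc n → ℝ
  H : Fin m → Euc n → ℝ
  f' : Euc n → Euc n
  g' : Fin p → Euc n → Euc n
  h' : Fin q → Euc n → Euc n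
  G' : Fin m → Euc n → Euc n
  H' : Fin m → Euc n → Euc n
  grad_f : ∀ z, HasGradientAt f (f' z) z
  grad_g : ∀ i z, HasGradientAt (g i) (g' i z) z
  grad_h : ∀ j z, HasGradientAt (h j) (h' j z) z
  grad_G : ∀ i z, HasGradientAt (G i) (G' i z) z
  grad_H : ∀ i z, HasGradientAt (H i) (H' i z) z
  cont_f' : Continuous f'
  cont_g' : ∀ i, Continuous (g' i)
  cont_h' : ∀ j, Continuous (h' j)
  cont_G' : ∀ i, Continuous (G' i)
  cont_H' : ∀ i, Continuous (H' i)

namespace MPSC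

variable {n p q m : ℕ} (P : MPSC n p q m)

/-- The feasible region `F` of the MPSC. -/
def Feas : Set (Euc n) :=
  {z | (∀ i, P.g i z ≤ 0) ∧ (∀ j, P.h j z = 0) ∧ ∀ i, P.G i z * P.H i z = 0}

/-- Active inequality constraints `I_g*`. -/
def Ig (zs : Euc n) : Set (Fin p) := {i | P.g i zs = 0}

/-- `I_G* = {i : Gᵢ(z*) = 0, Hᵢ(z*) ≠ 0}`. -/
def IGs (zs : Euc n) : Set (Fin m) := {i | P.G i zs = 0 ∧ P.H i zs ≠ 0}

/-- `I_H* = {i : Gᵢ(z*) ≠ 0, Hᵢ(z*) = 0}`. -/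
def IHs (zs : Euc n) : Set (Fin m) := {i | P.G i zs ≠ 0 ∧ P.H i zs = 0}

/-- `I_GH* = {i : Gᵢ(z*) = Hᵢ(z*) = 0}`. -/
def IGH (zs : Euc n) : Set (Fin m) := {i | P.G i zs = 0 ∧ P.H i zs = 0}

/-- `I_g*(d)`. -/
def Igd (zs d : Euc n) : Set (Fin p) := {i | P.g i zs = 0 ∧ ⟪P.g' i zs, d⟫_ℝ = 0}

/-- `I_G*(d)`. -/
def IGd (zs d : Euc n) : Set (Fin m) :=
  {i | i ∈ P.IGH zs ∧ ⟪P.G' i zs, d⟫_ℝ = 0 ∧ ⟪P.H' i zs, d⟫_ℝ ≠ 0}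

/-- `I_H*(d)`. -/
def IHd (zs d : Euc n) : Set (Fin m) :=
  {i | i ∈ P.IGH zs ∧ ⟪P.G' i zs, d⟫_ℝ ≠ 0 ∧ ⟪P.H' i zs, d⟫_ℝ = 0}

/-- `I_GH*(d)`. -/
def IGHd (zs d : Euc n) : Set (Fin m) :=
  {i | i ∈ P.IGH zs ∧ ⟪P.G' i zs, d⟫_ℝ = 0 ∧ ⟪P.H' i zs, d⟫_ℝ = 0}

/-- The linearization cone `L(z*)` of the MPSC at `z*`. -/
def LinCone (zs : Euc n) : Set (Euc n) :=
  {d | (∀ i ∈ P.Ig zs, ⟪P.g' i zs, d⟫_ℝ ≤ 0) ∧ (∀ j, ⟪P.h' j zs, d⟫_ℝ = 0) ∧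
       (∀ i ∈ P.IGs zs, ⟪P.G' i zs, d⟫_ℝ = 0) ∧ (∀ i ∈ P.IHs zs, ⟪P.H' i zs, d⟫_ℝ = 0) ∧
       (∀ i ∈ P.IGH zs, ⟪P.G' i zs, d⟫_ℝ * ⟪P.H' i zs, d⟫_ℝ = 0)}

/-- The critical cone `C(z*)`. -/
def Crit (zs : Euc n) : Set (Euc n) := {d ∈ P.LinCone zs | ⟪P.f' zs, d⟫_ℝ ≤ 0}

/-- `(λ^g, λ^h, λ^G, λ^H)` is an M-multiplier in direction `d` at `z*`. -/
def IsMMultDir (zs d : Euc n) (lg : Fin p → ℝ) (lh : Fin q → ℝ) (lG lH : Fin m → ℝ) : Prop :=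
  ((0 : Euc n) = P.f' zs
      + (∑ i ∈ Finset.univ.filter (fun i => i ∈ P.Igd zs d), lg i • P.g' i zs)
      + (∑ j, lh j • P.h' j zs) + (∑ i, (lG i • P.G' i zs + lH i • P.H' i zs))) ∧
  (∀ i ∈ P.Igd zs d, 0 ≤ lg i) ∧ (∀ i ∉ P.Igd zs d, lg i = 0) ∧
  (∀ i, i ∈ P.IHs zs ∪ P.IHd zs d → lG i = 0) ∧
  (∀ i, i ∈ P.IGs zs ∪ P.IGd zs d → lH i = 0) ∧
  ∀ i ∈ P.IGHd zs d, lG i * lH i = 0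

/-- `z*` is M-stationary in direction `d`. -/
def MStatDir (zs d : Euc n) : Prop :=
  ∃ (lg : Fin p → ℝ) (lh : Fin q → ℝ) (lG lH : Fin m → ℝ), P.IsMMultDir zs d lg lh lG lH

/-- `z*` is S-stationary in direction `d`. -/
def SStatDir (zs d : Euc n) : Prop :=
  ∃ (lg : Fin p → ℝ) (lh : Fin q → ℝ) (lG lH : Fin m → ℝ),
    P.IsMMultDir zs d lg lh lG lH ∧ ∀ i ∈ P.IGHd zs d, lG i = 0 ∧ lH i = 0

/-- MPSC-LICQ in direction `d` at `z*`. -/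
def LICQd (zs d : Euc n) : Prop :=
  LinearIndependent ℝ
    (Sum.elim (fun i : {i // i ∈ P.Igd zs d} => P.g' i.1 zs)
      (Sum.elim (fun j : Fin q => P.h' j zs)
        (Sum.elim (fun i : {i // i ∈ P.IGs zs ∪ P.IGd zs d ∪ P.IGHd zs d} => P.G' i.1 zs)
          (fun i : {i // i ∈ P.IHs zs ∪ P.IHd zs d ∪ P.IGHd zs d} => P.H' i.1 zs))))

/-- MPSC-LICQ at `z*`. -/
def LICQ (zs : Euc n) : Prop :=
  LinearIndependent ℝ
    (Sum.elim (fun i : {i // i ∈ P.Ig zs} => P.g' i.1 zs)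
      (Sum.elim (fun j : Fin q => P.h' j zs)
        (Sum.elim (fun i : {i // i ∈ P.IGs zs ∪ P.IGH zs} => P.G' i.1 zs)
          (fun i : {i // i ∈ P.IHs zs ∪ P.IGH zs} => P.H' i.1 zs))))

/-- MPSC quasi-normality at `z*` in direction `d`. -/
def QuasiNormalDir (zs d : Euc n) : Prop :=
  ∀ (lg : Fin p → ℝ) (lh : Fin q → ℝ) (lG lH : Fin m → ℝ),
    ((0 : Euc n) = (∑ i, lg i • P.g' i zs) + (∑ j, lh j • P.h' j zs)
        + (∑ i, (lG i • P.G' i zs + lH i • P.H' i zs))) →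
    ((∀ i ∈ P.Igd zs d, 0 ≤ lg i) ∧ (∀ i ∉ P.Igd zs d, lg i = 0) ∧
      (∀ i, i ∈ P.IGs zs ∪ P.IGd zs d → lH i = 0) ∧
      (∀ i, i ∈ P.IHs zs ∪ P.IHd zs d → lG i = 0) ∧
      ∀ i ∈ P.IGHd zs d, lG i * lH i = 0) →
    (∃ (dk : ℕ → Euc n) (t : ℕ → ℝ),
      Tendsto dk atTop (𝓝 d) ∧ (∀ k, 0 < t k) ∧ Tendsto t atTop (𝓝 0) ∧
      ∀ k, (∀ i, lg i ≠ 0 → 0 < lg i * P.g i (zs + t k • dk k)) ∧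
        (∀ j, lh j ≠ 0 → 0 < lh j * P.h j (zs + t k • dk k)) ∧
        (∀ i, lG i ≠ 0 → 0 < lG i * P.G i (zs + t k • dk k)) ∧
        (∀ i, lH i ≠ 0 → 0 < lH i * P.H i (zs + t k • dk k))) →
    lg = 0 ∧ lh = 0 ∧ lG = 0 ∧ lH = 0

/-- MPSC directional quasi-normality at `z*`: quasi-normality in every direction of
the linearization cone. -/
def DirQuasiNormal (zs : Euc n) : Prop := ∀ d ∈ P.LinCone zs, P.QuasiNormalDir zs d

/-- `(λ^g, λ^h, λ^G, λ^H)` is an S-multiplier at `z*` (S-stationarity conditions). -/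
def IsSMult (zs : Euc n) (lg : Fin p → ℝ) (lh : Fin q → ℝ) (lG lH : Fin m → ℝ) : Prop :=
  ((0 : Euc n) = P.f' zs
      + (∑ i ∈ Finset.univ.filter (fun i => i ∈ P.Ig zs), lg i • P.g' i zs)
      + (∑ j, lh j • P.h' j zs) + (∑ i, (lG i • P.G' i zs + lH i • P.H' i zs))) ∧
  (∀ i ∈ P.Ig zs, 0 ≤ lg i) ∧ (∀ i ∈ P.IHs zs, lG i = 0) ∧ (∀ i ∈ P.IGs zs, lH i = 0) ∧
  ∀ i ∈ P.IGH zs, lG i = 0 ∧ lH i = 0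

/-- `(λ^g, λ^h, λ^G, λ^H)` is an M-multiplier at `z*` (M-stationarity conditions). -/
def IsMMult (zs : Euc n) (lg : Fin p → ℝ) (lh : Fin q → ℝ) (lG lH : Fin m → ℝ) : Prop :=
  ((0 : Euc n) = P.f' zs
      + (∑ i ∈ Finset.univ.filter (fun i => i ∈ P.Ig zs), lg i • P.g' i zs)
      + (∑ j, lh j • P.h' j zs) + (∑ i, (lG i • P.G' i zs + lH i • P.H' i zs))) ∧
  (∀ i ∈ P.Ig zs, 0 ≤ lg i) ∧ (∀ i ∈ P.IHs zs, lG i = 0) ∧ (∀ i ∈ P.IGs zs, lH i = 0) ∧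
  ∀ i ∈ P.IGH zs, lG i * lH i = 0

/-- The rank `r(z*; d)` of the relevant family of gradients. -/
def rankd (zs d : Euc n) : ℕ :=
  Set.finrank ℝ
    ((fun i => P.g' i zs) '' P.Igd zs d ∪ Set.range (fun j => P.h' j zs) ∪
      (fun i => P.G' i zs) '' (P.IGs zs ∪ P.IGd zs d ∪ P.IGHd zs d) ∪
      (fun i => P.H' i zs) '' (P.IHs zs ∪ P.IHd zs d ∪ P.IGHd zs d))

/-- `(J_g, J_G, J_H)` is an MPSC working set in direction `d`. -/
def IsWorkingSet (zs d : Euc n) (Jg : Finset (Fin p)) (JG JH : Finset (Fin m)) : Prop :=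
  (∀ i ∈ Jg, i ∈ P.Igd zs d) ∧
  (∀ i ∈ JG, i ∈ P.IGs zs ∪ P.IGd zs d ∪ P.IGHd zs d) ∧
  (∀ i ∈ JH, i ∈ P.IHs zs ∪ P.IHd zs d ∪ P.IGHd zs d) ∧
  JG ∪ JH = Finset.univ ∧
  Jg.card + q + JG.card + JH.card = P.rankd zs d ∧
  LinearIndependent ℝ
    (Sum.elim (fun i : {i // i ∈ Jg} => P.g' i.1 zs)
      (Sum.elim (fun j : Fin q => P.h' j zs)
        (Sum.elim (fun i : {i // i ∈ JG} => P.G' i.1 zs)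
          (fun i : {i // i ∈ JH} => P.H' i.1 zs))))

/-- `z*` is strongly M-stationary in direction `d`. -/
def StronglyMStatDir (zs d : Euc n) : Prop :=
  ∃ (Jg : Finset (Fin p)) (JG JH : Finset (Fin m)) (lg : Fin p → ℝ) (lh : Fin q → ℝ)
    (lG lH : Fin m → ℝ),
    P.IsWorkingSet zs d Jg JG JH ∧ P.IsMMultDir zs d lg lh lG lH ∧
    (∀ i ∉ Jg, lg i = 0) ∧ (∀ i ∉ JG, lG i = 0) ∧ (∀ i ∉ JH, lH i = 0) ∧
    ∀ i ∈ JG ∩ JH, lG i = 0 ∧ lH i = 0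

/-- The MPSC constraint-violation residual. -/
def residual (z : Euc n) : ℝ :=
  (∑ i, max (P.g i z) 0) + (∑ j, |P.h j z|) + ∑ i, min |P.G i z| |P.H i z|

/-- The MPSC local error bound property around `z*`. -/
def ErrorBound (zs : Euc n) : Prop :=
  ∃ V ∈ 𝓝 zs, ∃ α > (0 : ℝ), ∀ z ∈ V, Metric.infDist z P.Feas ≤ α * P.residual z

/-- Equality-constraint gradients (at `z`) of the branch problem `NLP(β₁, β₂)`. -/
def EqGrads (zs : Euc n) (b1 b2 : Set (Fin m)) (z : Euc n) : Set (Euc n) :=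
  Set.range (fun j => P.h' j z) ∪ (fun i => P.G' i z) '' (P.IGs zs ∪ b1) ∪
    (fun i => P.H' i z) '' (P.IHs zs ∪ b2)

/-- The index set `I⁻` of the branch problem `NLP(β₁, β₂)` at `z*`. -/
def Iminus (zs : Euc n) (b1 b2 : Set (Fin m)) : Set (Fin p) :=
  {l | l ∈ P.Ig zs ∧
    ∃ (lh : Fin q → ℝ) (lG lH : Fin m → ℝ) (mu : Fin p → ℝ),
      (∀ i, i ∉ P.IGs zs ∪ b1 → lG i = 0) ∧ (∀ i, i ∉ P.IHs zs ∪ b2 → lH i = 0) ∧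
      (∀ i, 0 ≤ mu i) ∧ (∀ i, ¬(i ∈ P.Ig zs ∧ i ≠ l) → mu i = 0) ∧
      -(P.g' l zs) = (∑ j, lh j • P.h' j zs)
        + (∑ i, (lG i • P.G' i zs + lH i • P.H' i zs)) + (∑ i, mu i • P.g' i zs)}

/-- CRSC holds at `z*` for the branch problem `NLP(β₁, β₂)`. -/
def CRSCpiece (zs : Euc n) (b1 b2 : Set (Fin m)) : Prop :=
  ∃ U ∈ 𝓝 zs, ∀ z ∈ U,
    Set.finrank ℝ ((fun i => P.g' i z) '' P.Iminus zs b1 b2 ∪ P.EqGrads zs b1 b2 z) =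
      Set.finrank ℝ ((fun i => P.g' i zs) '' P.Iminus zs b1 b2 ∪ P.EqGrads zs b1 b2 zs)

/-- MPSC piecewise CRSC: CRSC holds for every branch problem `NLP(β₁, β₂)`. -/
def PiecewiseCRSC (zs : Euc n) : Prop :=
  ∀ b1 b2 : Set (Fin m), b1 ∪ b2 = P.IGH zs → b1 ∩ b2 = ∅ → P.CRSCpiece zs b1 b2

/-- The set-valued map `K` (index sets frozen at `z*`, gradients at `z`). -/
def Kmap (zs z : Euc n) : Set (Euc n) :=
  {y | ∃ (lg : Fin p → ℝ) (lh : Fin q → ℝ) (lG lH : Fin m → ℝ),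
      (∀ i, 0 ≤ lg i) ∧ (∀ i, i ∉ P.Ig zs → lg i = 0) ∧
      (∀ i ∈ P.IGs zs, lH i = 0) ∧ (∀ i ∈ P.IHs zs, lG i = 0) ∧
      (∀ i ∈ P.IGH zs, lG i * lH i = 0) ∧
      y = (∑ i, lg i • P.g' i z) + (∑ j, lh j • P.h' j z)
          + (∑ i, (lG i • P.G' i z + lH i • P.H' i z))}

/-- `z*` is AM-regular. -/
def AMRegular (zs : Euc n) : Prop :=
  ∀ y : Euc n,
    (∃ zk yk : ℕ → Euc n, Tendsto zk atTop (𝓝 zs) ∧ Tendsto yk atTop (𝓝 y) ∧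
      ∀ k, yk k ∈ P.Kmap zs (zk k)) → y ∈ P.Kmap zs zs

/-- The regular (Fréchet) normal cone to `A` at `x`. -/
def frechetNormalCone (A : Set (Euc n)) (x : Euc n) : Set (Euc n) :=
  {ζ | ∀ ε > (0 : ℝ), ∃ δ > (0 : ℝ), ∀ y ∈ A, ‖y - x‖ < δ → ⟪ζ, y - x⟫_ℝ ≤ ε * ‖y - x‖}

/-- The generalized Guignard constraint qualification at `z*`. -/
def GGCQ (zs : Euc n) : Prop :=
  frechetNormalCone P.Feas zs = {ζ | ∀ d ∈ P.LinCone zs, ⟪ζ, d⟫_ℝ ≤ 0}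

/-- Membership in the multiplier set `R_SC`. -/
def InRSC (zs : Euc n) (lg : Fin p → ℝ) (lh : Fin q → ℝ) (lG lH : Fin m → ℝ) : Prop :=
  (∀ i, i ∉ P.Ig zs → lg i = 0) ∧ (∀ i ∈ P.IHs zs, lG i = 0) ∧ ∀ i ∈ P.IGs zs, lH i = 0

/-- Membership in the multiplier set `N_SC`. -/
def InNSC (zs : Euc n) (mg : Fin p → ℝ) (mh : Fin q → ℝ) (mG mH : Fin m → ℝ) : Prop :=
  P.InRSC zs mg mh mG mH ∧
  (0 : Euc n) = (∑ i, mg i • P.g' i zs) + (∑ j, mh j • P.h' j zs)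
      + (∑ i, (mG i • P.G' i zs + mH i • P.H' i zs))

/-- `z*` is Q-stationary with respect to the bipartition `(β₁, β₂)` of `I_GH*`. -/
def QStat (zs : Euc n) (b1 b2 : Set (Fin m)) : Prop :=
  ∃ (lg mg : Fin p → ℝ) (lh mh : Fin q → ℝ) (lG lH mG mH : Fin m → ℝ),
    P.InRSC zs lg lh lG lH ∧
    ((0 : Euc n) = P.f' zs + (∑ i, lg i • P.g' i zs) + (∑ j, lh j • P.h' j zs)
        + (∑ i, (lG i • P.G' i zs + lH i • P.H' i zs))) ∧
    P.InNSC zs mg mh mG mH ∧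
    (∀ i ∈ P.Ig zs, max (mg i) 0 ≤ lg i) ∧
    (∀ i ∈ b1, lH i = 0 ∧ lG i = mG i) ∧
    ∀ i ∈ b2, lG i = 0 ∧ lH i = mH i

end MPSC


section Aux

variable {E : Type*} [NormedAddCommGroup E] [InnerProductSpace ℝ E] [FiniteDimensional ℝ E]

theorem aux_contDiff {f : E → ℝ} {f' : E → E} (hf : ∀ z, HasGradientAt f (f' z) z)
    (hc : Continuous f') : ContDiff ℝ 1 f := by
  rw [contDiff_one_iff_hasFDerivAt]
  exact ⟨fun z => InnerProductSpace.toDual ℝ E (f' z),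
    (InnerProductSpace.toDual ℝ E).continuous.comp hc, fun z => (hf z).hasFDerivAt⟩

/-- straightening coordinates -/
theorem aux_coords {B : Type*} [Fintype B] (φ : B → E → ℝ) (φ' : B → E → E) (z0 : E)
    (hφ : ∀ b z, HasGradientAt (φ b) (φ' b z) z) (hc : ∀ b, Continuous (φ' b))
    (hli : LinearIndependent ℝ (fun b => φ' b z0)) :
    ∃ (N : Submodule ℝ E) (Ψ : E → (B → ℝ) × N) (ψ : (B → ℝ) × N → E),
      ContDiff ℝ 1 Ψ ∧ ContDiffAt ℝ 1 ψ (Ψ z0) ∧ ψ (Ψ z0) = z0 ∧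
      (∀ z b, (Ψ z).1 b = φ b z) ∧
      (∀ᶠ z in 𝓝 z0, ψ (Ψ z) = z) ∧ (∀ᶠ p in 𝓝 (Ψ z0), Ψ (ψ p) = p) := by
  classical
  set S : Submodule ℝ E := Submodule.span ℝ (Set.range fun b => φ' b z0) with hS
  let Ψ : E → (B → ℝ) × Sᗮ := fun z => (fun b => φ b z, Sᗮ.orthogonalProjectionOnto z)
  have hΨ : ContDiff ℝ 1 Ψ := by
    refine ContDiff.prodMk ?_ (Sᗮ.orthogonalProjectionOnto).contDiff
    rw [contDiff_pi]
    exact fun b => aux_contDiff (hφ b) (hc b)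
  let A : E →L[ℝ] (B → ℝ) × Sᗮ :=
    (ContinuousLinearMap.pi fun b => (InnerProductSpace.toDual ℝ E (φ' b z0) : E →L[ℝ] ℝ)).prod
      Sᗮ.orthogonalProjectionOnto
  have hA : HasFDerivAt Ψ A z0 := by
    refine HasFDerivAt.prodMk ?_ (Sᗮ.orthogonalProjectionOnto).hasFDerivAt
    rw [hasFDerivAt_pi]
    exact fun b => (hφ b z0).hasFDerivAt
  have hinj : Function.Injective A.toLinearMap := by
    rw [← LinearMap.ker_eq_bot, LinearMap.ker_eq_bot']
    intro z hz
    have h1 : ∀ b, ⟪φ' b z0, z⟫_ℝ = 0 := fun b => by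
      have := congrFun (congrArg Prod.fst hz) b
      simpa [A] using this
    have h2 : Sᗮ.orthogonalProjectionOnto z = 0 := by
      have := congrArg Prod.snd hz
      simpa [A] using this
    have hz : z ∈ Sᗮ := by
      rw [Submodule.mem_orthogonal]
      intro u hu
      induction hu using Submodule.span_induction with
      | mem x hx => obtain ⟨b, rfl⟩ := hx; exact h1 b
      | zero => simp
      | add x y _ _ hx hy => simp [inner_add_left, hx, hy]
      | smul a x _ hx => simp [inner_smul_left, hx]
    have h3 := Submodule.orthogonalProjectionOnto_mem_subspace_eq_self (K := Sᗮ) ⟨z, hz⟩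
    rw [h2] at h3
    exact (congrArg Subtype.val h3).symm
  have hfr : Module.finrank ℝ E = Module.finrank ℝ ((B → ℝ) × Sᗮ) := by
    rw [Module.finrank_prod, Module.finrank_fintype_fun_eq_card, ← finrank_span_eq_card hli]
    exact (Submodule.finrank_add_finrank_orthogonal S).symm
  let e : E ≃L[ℝ] (B → ℝ) × Sᗮ :=
    (LinearEquiv.ofInjectiveOfFinrankEq A.toLinearMap hinj hfr).toContinuousLinearEquiv
  have he : HasFDerivAt Ψ (e : E →L[ℝ] (B → ℝ) × Sᗮ) z0 := by
    convert hA using 1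
    ext z <;> rfl
  have hst := hΨ.contDiffAt.hasStrictFDerivAt' he (one_ne_zero)
  refine ⟨Sᗮ, Ψ, hΨ.contDiffAt.localInverse he one_ne_zero, hΨ,
    hΨ.contDiffAt.to_localInverse he one_ne_zero,
    hΨ.contDiffAt.localInverse_apply_image he one_ne_zero, fun _ _ => rfl,
    hst.eventually_left_inverse, hst.eventually_right_inverse⟩

theorem aux_theta {B : Type*} [Fintype B] (φ : B → E → ℝ) (φ' : B → E → E) (z0 : E)
    (hφ : ∀ b z, HasGradientAt (φ b) (φ' b z) z)
    (h0 : ∀ b, φ b z0 = 0)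
    (N : Submodule ℝ E) (Ψ : E → (B → ℝ) × N) (ψ : (B → ℝ) × N → E)
    (hψ : ContDiffAt ℝ 1 ψ (Ψ z0)) (hψ0 : ψ (Ψ z0) = z0)
    (hΨφ : ∀ z b, (Ψ z).1 b = φ b z) (hr : ∀ᶠ p in 𝓝 (Ψ z0), Ψ (ψ p) = p)
    (Θ : E → ℝ) (Θ' : E → E) (hΘ : ∀ z, HasGradientAt Θ (Θ' z) z) (hc : Continuous Θ')
    (hsp : ∀ᶠ z in 𝓝 z0, Θ' z ∈ Submodule.span ℝ (Set.range fun b => φ' b z))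
    (hz : Θ z0 = 0) :
    (∀ᶠ p in 𝓝 (Ψ z0), p.1 = 0 → Θ (ψ p) = 0) ∧
    (Θ' z0 = 0 → ∀ ε > 0, ∀ᶠ p in 𝓝 (Ψ z0), |Θ (ψ p)| ≤ ε * ‖p.1‖) := by
  have hΘ1 : ContDiff ℝ 1 Θ := aux_contDiff hΘ hc
  have hcomp : ContDiffAt ℝ 1 (Θ ∘ ψ) (Ψ z0) := (hΘ1.contDiffAt).comp _ hψ
  have hψc : Tendsto ψ (𝓝 (Ψ z0)) (𝓝 z0) := by
    have := hψ.continuousAt.tendsto; rwa [hψ0] at this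
  have hdiffψ : ∀ᶠ p in 𝓝 (Ψ z0), DifferentiableAt ℝ ψ p := by
    filter_upwards [hψ.eventually (by simp)] with p hp using hp.differentiableAt one_ne_zero
  have hderiv : ∀ᶠ p in 𝓝 (Ψ z0), HasFDerivAt (Θ ∘ ψ)
      ((InnerProductSpace.toDual ℝ E (Θ' (ψ p)) : E →L[ℝ] ℝ).comp (fderiv ℝ ψ p)) p := by
    filter_upwards [hdiffψ] with p hp
    exact ((hΘ (ψ p)).hasFDerivAt).comp p hp.hasFDerivAt
  have hkill : ∀ᶠ p in 𝓝 (Ψ z0), ∀ w : N, fderiv ℝ (Θ ∘ ψ) p (0, w) = 0 := by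
    filter_upwards [hderiv, hdiffψ, hr.eventually_nhds, hψc.eventually hsp] with p h1 h2 h3 h4 w
    rw [h1.fderiv]
    have hb : ∀ b, ⟪φ' b (ψ p), fderiv ℝ ψ p (0, w)⟫_ℝ = 0 := by
      intro b
      have e1 : HasFDerivAt (φ b ∘ ψ) ((InnerProductSpace.toDual ℝ E (φ' b (ψ p)) : E →L[ℝ] ℝ).comp
        (fderiv ℝ ψ p)) p := ((hφ b (ψ p)).hasFDerivAt).comp p h2.hasFDerivAt
      let L : ((B → ℝ) × N) →L[ℝ] ℝ :=
        (ContinuousLinearMap.proj b).comp (ContinuousLinearMap.fst ℝ (B → ℝ) N)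
      have e2 : HasFDerivAt (φ b ∘ ψ) L p := by
        refine L.hasFDerivAt.congr_of_eventuallyEq ?_
        filter_upwards [h3] with p' hp'
        simp only [Function.comp, ← hΨφ, hp']
        rfl
      have := congrArg (fun T : ((B → ℝ) × N) →L[ℝ] ℝ => T (0, w)) (e1.unique e2)
      simpa [L] using this
    have : ∀ u ∈ Submodule.span ℝ (Set.range fun b => φ' b (ψ p)),
        ⟪u, fderiv ℝ ψ p (0, w)⟫_ℝ = 0 := by
      intro u hu
      induction hu using Submodule.span_induction with
      | mem x hx => obtain ⟨b, rfl⟩ := hx; exact hb b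
      | zero => simp
      | add x y _ _ hx hy => simp [inner_add_left, hx, hy]
      | smul a x _ hx => simp [inner_smul_left, hx]
    simpa using this _ h4
  have hΨ1 : (Ψ z0).1 = 0 := by ext b; simp [hΨφ, h0]
  have hA : ∀ᶠ p in 𝓝 (Ψ z0), p.1 = 0 → Θ (ψ p) = 0 := by
    obtain ⟨r, hr0, hball⟩ := Metric.eventually_nhds_iff_ball.1 (hkill.and hderiv)
    filter_upwards [Metric.ball_mem_nhds _ hr0] with p hp hp1
    -- one-dimensional mean value along segment
    have hconv := convex_ball (Ψ z0) r
    have := hconv.segment_subset (Metric.mem_ball_self hr0) hp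
    obtain ⟨c, hc1, hc2⟩ := domain_mvt (f := Θ ∘ ψ) (f' := fun p => fderiv ℝ (Θ ∘ ψ) p)
      (s := Metric.ball (Ψ z0) r) (x := Ψ z0) (y := p)
      (fun x hx => ((hball x hx).2.differentiableAt.hasFDerivAt).hasFDerivWithinAt) hconv
      (Metric.mem_ball_self hr0) hp
    have hd : p - Ψ z0 = (0, p.2 - (Ψ z0).2) := by
      ext1
      · simp [hp1, hΨ1]
      · simp
    rw [hd, (hball c (this hc1)).1] at hc2
    simp only [Function.comp, hψ0, hz] at hc2
    linarith
  refine ⟨hA, fun hz' ε hε => ?_⟩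
  have hst := hcomp.hasStrictFDerivAt one_ne_zero
  have hD0 : fderiv ℝ (Θ ∘ ψ) (Ψ z0) = 0 := by
    rw [hderiv.self_of_nhds.fderiv, hψ0, hz']; simp
  rw [hD0] at hst
  have hlo := hst.isLittleO.def hε
  have htend : Tendsto (fun p : (B → ℝ) × N => (p, ((0 : B → ℝ), p.2))) (𝓝 (Ψ z0))
      (𝓝 (Ψ z0, Ψ z0)) := by
    have : Continuous (fun p : (B → ℝ) × N => (p, ((0 : B → ℝ), p.2))) := by fun_prop
    have h := this.tendsto (Ψ z0)
    have e : (Ψ z0, Ψ z0) = (Ψ z0, ((0 : B → ℝ), (Ψ z0).2)) := by rw [← hΨ1]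
    rw [e]
    exact h
  have htend2 : Tendsto (fun p : (B → ℝ) × N => ((0 : B → ℝ), p.2)) (𝓝 (Ψ z0))
      (𝓝 (Ψ z0)) := (continuous_snd.tendsto _).comp htend
  filter_upwards [htend.eventually hlo, htend2.eventually hA] with p h1 h2
  have h2 := h2 rfl
  simp only [Function.comp, h2] at h1
  have : p - ((0 : B → ℝ), p.2) = (p.1, 0) := by ext1 <;> simp
  rw [this] at h1
  simpa [Prod.norm_def] using h1

theorem aux_support {ι κ : Type*} [Fintype ι] [Fintype κ] (a : ι → E) (b : κ → E)
    (I J : Set ι)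
    (hJ : ∀ l, l ∈ J ↔ l ∈ I ∧ ∃ (c : κ → ℝ) (mu : ι → ℝ), (∀ i, 0 ≤ mu i) ∧
      (∀ i, ¬(i ∈ I ∧ i ≠ l) → mu i = 0) ∧ -(a l) = (∑ j, c j • b j) + ∑ i, mu i • a i)
    (nu : ι → ℝ) (c : κ → ℝ) (h0 : ∀ i, 0 ≤ nu i) (h1 : ∀ i, i ∉ I → nu i = 0)
    (hs : (∑ i, nu i • a i) + ∑ j, c j • b j = 0) (l : ι) (hl : nu l ≠ 0) : l ∈ J := by
  classical
  have hpos : 0 < nu l := lt_of_le_of_ne (h0 l) (Ne.symm hl)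
  rw [hJ]
  refine ⟨by by_contra h; exact hl (h1 l h), fun j => (nu l)⁻¹ * c j,
    fun i => if i = l then 0 else (nu l)⁻¹ * nu i, ?_, ?_, ?_⟩
  · intro i
    dsimp only
    split_ifs
    · exact le_rfl
    · exact mul_nonneg (inv_nonneg.2 (h0 l)) (h0 i)
  · intro i hi
    dsimp only
    split_ifs with h
    · rfl
    · rw [h1 i (fun hI => hi ⟨hI, h⟩), mul_zero]
  · have e1 : ∑ i, (if i = l then 0 else (nu l)⁻¹ * nu i) • a i
        = (nu l)⁻¹ • (∑ i, nu i • a i) - a l := by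
      rw [Finset.smul_sum, eq_sub_iff_add_eq]
      have : a l = ∑ i, if i = l then a l else 0 := by simp
      rw [this, ← Finset.sum_add_distrib]
      refine Finset.sum_congr rfl fun i _ => ?_
      by_cases h : i = l
      · subst h; simp [smul_smul, inv_mul_cancel₀ hl]
      · simp [h, smul_smul]
    have e2 : ∑ j, ((nu l)⁻¹ * c j) • b j = (nu l)⁻¹ • ∑ j, c j • b j := by
      rw [Finset.smul_sum]
      exact Finset.sum_congr rfl fun j _ => (smul_smul _ _ _).symm
    rw [e1, e2, eq_neg_of_add_eq_zero_left hs, smul_neg]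
    abel

theorem aux_relation {ι κ : Type*} [Fintype ι] [Fintype κ] (a : ι → E) (b : κ → E)
    (I J : Set ι)
    (hJ : ∀ l, l ∈ J ↔ l ∈ I ∧ ∃ (c : κ → ℝ) (mu : ι → ℝ), (∀ i, 0 ≤ mu i) ∧
      (∀ i, ¬(i ∈ I ∧ i ≠ l) → mu i = 0) ∧ -(a l) = (∑ j, c j • b j) + ∑ i, mu i • a i) :
    ∃ (mu : ι → ℝ) (c : κ → ℝ), (∀ i ∈ J, 1 ≤ mu i) ∧ (∀ i, i ∉ J → mu i = 0) ∧
      (∑ i, mu i • a i) + ∑ j, c j • b j = 0 := by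
  classical
  have key : ∀ l : J, ∃ (mu : ι → ℝ) (c : κ → ℝ), (∀ i, 0 ≤ mu i) ∧ 1 ≤ mu l ∧
      (∀ i, i ∉ J → mu i = 0) ∧ (∑ i, mu i • a i) + ∑ j, c j • b j = 0 := by
    intro l
    obtain ⟨hI, c, mu, hm0, hm1, hs⟩ := (hJ l.1).1 l.2
    have hn0 : ∀ i, 0 ≤ mu i + if i = l.1 then 1 else 0 := fun i => by
      have := hm0 i
      split_ifs <;> linarith
    have hn1 : ∀ i, i ∉ I → (mu i + if i = l.1 then 1 else 0) = 0 := by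
      intro i hi
      have : i ≠ l.1 := fun h => hi (h ▸ hI)
      simp [this, hm1 i (fun h => hi h.1)]
    have hns : (∑ i, (mu i + if i = l.1 then 1 else 0) • a i) + ∑ j, c j • b j = 0 := by
      simp only [add_smul, Finset.sum_add_distrib, ite_smul, one_smul, zero_smul,
        Finset.sum_ite_eq', Finset.mem_univ, if_true]
      have : a l.1 = -((∑ j, c j • b j) + ∑ i, mu i • a i) := by rw [← hs, neg_neg]
      rw [this]; abel
    refine ⟨fun i => mu i + if i = l.1 then 1 else 0, c, hn0, ?_, ?_, hns⟩
    · have := hm0 l.1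
      simpa using this
    · intro i hi
      by_contra h
      exact hi (aux_support a b I J hJ _ c hn0 hn1 hns i h)
  choose mu c h0 h1 h2 h3 using key
  refine ⟨fun i => ∑ l, mu l i, fun j => ∑ l, c l j, ?_, ?_, ?_⟩
  · intro i hi
    exact (h1 ⟨i, hi⟩).trans (Finset.single_le_sum (f := fun l => mu l i)
      (fun l _ => h0 l i) (Finset.mem_univ (⟨i, hi⟩ : J)))
  · intro i hi
    exact Finset.sum_eq_zero fun l _ => h2 l i hi
  · simp only [Finset.sum_smul]
    rw [Finset.sum_comm, Finset.sum_comm (s := (Finset.univ : Finset κ)),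
      ← Finset.sum_add_distrib]
    exact Finset.sum_eq_zero fun l _ => h3 l

theorem aux_direction {ι κ : Type*} [Fintype ι] [Fintype κ] (a : ι → E) (b : κ → E)
    (I J : Set ι)
    (hJ : ∀ l, l ∈ J ↔ l ∈ I ∧ ∃ (c : κ → ℝ) (mu : ι → ℝ), (∀ i, 0 ≤ mu i) ∧
      (∀ i, ¬(i ∈ I ∧ i ≠ l) → mu i = 0) ∧ -(a l) = (∑ j, c j • b j) + ∑ i, mu i • a i) :
    ∃ d : E, (∀ j, ⟪b j, d⟫_ℝ = 0) ∧ (∀ i ∈ J, ⟪a i, d⟫_ℝ = 0) ∧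
      ∀ i ∈ I, i ∉ J → ⟪a i, d⟫_ℝ ≤ -2 := by
  classical
  obtain ⟨mu, c, hm1, hm2, hms⟩ := aux_relation a b I J hJ
  have hJI : ∀ i ∈ J, i ∈ I := fun i hi => ((hJ i).1 hi).1
  set S : Submodule ℝ E :=
    Submodule.span ℝ (Set.range (Sum.elim (fun i => if i ∈ J then a i else 0) b)) with hS
  let pr := Sᗮ.orthogonalProjectionOnto
  let T : ({i // i ∈ I ∧ i ∉ J} → ℝ) →ₗ[ℝ] Sᗮ :=
    Fintype.linearCombination ℝ (fun i => pr (a i.1))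
  let K : Set Sᗮ := T '' stdSimplex ℝ {i // i ∈ I ∧ i ∉ J}
  have hKc : IsCompact K :=
    (isCompact_stdSimplex ℝ _).image (LinearMap.continuous_of_finiteDimensional T)
  have hKv : Convex ℝ K := (convex_stdSimplex ℝ _).linear_image T
  have h0 : (0 : Sᗮ) ∉ K := by
    rintro ⟨nu, ⟨hnu0, hnu1⟩, hT⟩
    let nt : ι → ℝ := fun i => if h : i ∈ I ∧ i ∉ J then nu ⟨i, h⟩ else 0
    have hnt : ∀ i : {i // i ∈ I ∧ i ∉ J}, nt i.1 = nu i := fun i => by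
      simp [nt, i.2]
    have hnt0 : ∀ i, 0 ≤ nt i := fun i => by
      dsimp only [nt]; split_ifs with h
      · exact hnu0 _
      · exact le_rfl
    have hnt1 : ∀ i, ¬ (i ∈ I ∧ i ∉ J) → nt i = 0 := fun i hi => by
      dsimp only [nt]; rw [dif_neg hi]
    have hsum : ∑ i, nt i • a i = ∑ i : {i // i ∈ I ∧ i ∉ J}, nu i • a i.1 := by
      rw [← Finset.sum_filter_of_ne (p := fun i => i ∈ I ∧ i ∉ J),
        Finset.sum_subtype (p := fun i => i ∈ I ∧ i ∉ J)]
      · exact Finset.sum_congr rfl fun i _ => by rw [hnt]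
      · intro i; simp
      · intro i _ hi
        by_contra h
        exact hi (by rw [hnt1 i h, zero_smul])
    have hmem : ∑ i, nt i • a i ∈ S := by
      rw [hsum, ← Submodule.orthogonal_orthogonal S]
      rw [← Submodule.orthogonalProjectionOnto_eq_zero_iff]
      have : T nu = pr (∑ i : {i // i ∈ I ∧ i ∉ J}, nu i • a i.1) := by
        simp [T, Fintype.linearCombination_apply, map_sum]
      rw [← hT, this]
    rw [hS, Submodule.mem_span_range_iff_exists_fun] at hmem
    obtain ⟨co, hco⟩ := hmem
    rw [Fintype.sum_sum_type] at hco
    simp only [Sum.elim_inl, Sum.elim_inr, smul_ite, smul_zero] at hco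
    set M : ℝ := ∑ i, |co (Sum.inl i)| with hM
    have hMle : ∀ i, |co (Sum.inl i)| ≤ M := fun i =>
      Finset.single_le_sum (f := fun i => |co (Sum.inl i)|) (fun _ _ => abs_nonneg _)
        (Finset.mem_univ i)
    have hM0 : 0 ≤ M := Finset.sum_nonneg fun _ _ => abs_nonneg _
    let rho : ι → ℝ := fun i => nt i - (if i ∈ J then co (Sum.inl i) else 0) + M * mu i
    have hrho0 : ∀ i, 0 ≤ rho i := by
      intro i
      dsimp only [rho]
      split_ifs with h
      · have h1 := hm1 i h
        have h2 := hMle i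
        have h3 := le_abs_self (co (Sum.inl i))
        nlinarith [hnt0 i]
      · rw [hm2 i h]; linarith [hnt0 i]
    have hrho1 : ∀ i, i ∉ I → rho i = 0 := by
      intro i hi
      have hiJ : i ∉ J := fun h => hi (hJI i h)
      dsimp only [rho]
      rw [hnt1 i (fun h => hi h.1), if_neg hiJ, hm2 i hiJ]; ring
    have hrs : (∑ i, rho i • a i) + ∑ j, (M * c j - co (Sum.inr j)) • b j = 0 := by
      have e1 : ∑ i, rho i • a i = ∑ i, nt i • a i
          - (∑ i, if i ∈ J then co (Sum.inl i) • a i else 0) + M • ∑ i, mu i • a i := by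
        rw [Finset.smul_sum, ← Finset.sum_sub_distrib, ← Finset.sum_add_distrib]
        refine Finset.sum_congr rfl fun i _ => ?_
        dsimp only [rho]
        split_ifs <;> simp [add_smul, sub_smul, smul_smul]
      have e2 : ∑ j, (M * c j - co (Sum.inr j)) • b j
          = M • (∑ j, c j • b j) - ∑ j, co (Sum.inr j) • b j := by
        rw [Finset.smul_sum, ← Finset.sum_sub_distrib]
        exact Finset.sum_congr rfl fun j _ => by simp [sub_smul, smul_smul]
      rw [e1, e2, ← hco, eq_neg_of_add_eq_zero_left hms, smul_neg]
      abel
    have : ∃ i, nu i ≠ 0 := by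
      by_contra h
      push Not at h
      simp [h] at hnu1
    obtain ⟨l, hl⟩ := this
    refine l.2.2 (aux_support a b I J hJ rho _ hrho0 hrho1 hrs l.1 ?_)
    dsimp only [rho]
    rw [if_neg l.2.2, hm2 _ l.2.2, hnt]
    simpa using hl
  obtain ⟨f, u, hu0, hu⟩ := geometric_hahn_banach_point_closed hKv hKc.isClosed h0
  rw [map_zero] at hu0
  obtain ⟨d1, rfl⟩ := (InnerProductSpace.toDual ℝ Sᗮ).surjective f
  have horth : ∀ x ∈ S, ⟪x, (d1 : E)⟫_ℝ = 0 := fun x hx =>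
    (Submodule.mem_orthogonal S (d1 : E)).1 d1.2 x hx
  refine ⟨(-(2 / u)) • (d1 : E), ?_, ?_, ?_⟩
  · intro j
    rw [inner_smul_right, horth (b j) (Submodule.subset_span ⟨Sum.inr j, rfl⟩), mul_zero]
  · intro i hi
    rw [inner_smul_right, horth (a i) (Submodule.subset_span ⟨Sum.inl i, by simp [hi]⟩), mul_zero]
  · intro i hi hiJ
    have h1 := hu (pr (a i)) ⟨Pi.single ⟨i, hi, hiJ⟩ 1, single_mem_stdSimplex ℝ _, by
      simp [T, Fintype.linearCombination_apply_single]⟩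
    have h2 : ⟪a i, (d1 : E)⟫_ℝ = ⟪d1, pr (a i)⟫_ℝ := by
      rw [real_inner_comm]
      simp [pr]
    rw [InnerProductSpace.toDual_apply_apply] at h1
    rw [inner_smul_right, h2]
    have : (2 / u) * u ≤ (2 / u) * ⟪d1, pr (a i)⟫_ℝ :=
      mul_le_mul_of_nonneg_left h1.le (by positivity)
    rw [div_mul_cancel₀ _ hu0.ne'] at this
    linarith

theorem aux_nlp {ι κ : Type*} [Fintype ι] [Fintype κ]
    (g : ι → E → ℝ) (g' : ι → E → E) (h : κ → E → ℝ) (h' : κ → E → E) (z0 : E)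
    (hg : ∀ i z, HasGradientAt (g i) (g' i z) z) (hgc : ∀ i, Continuous (g' i))
    (hh : ∀ i z, HasGradientAt (h i) (h' i z) z) (hhc : ∀ i, Continuous (h' i))
    (hg0 : ∀ i, g i z0 ≤ 0) (hh0 : ∀ j, h j z0 = 0) (J : Set ι)
    (hJ : ∀ l, l ∈ J ↔ l ∈ {i | g i z0 = 0} ∧ ∃ (c : κ → ℝ) (mu : ι → ℝ), (∀ i, 0 ≤ mu i) ∧
      (∀ i, ¬(i ∈ {i | g i z0 = 0} ∧ i ≠ l) → mu i = 0) ∧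
      -(g' l z0) = (∑ j, c j • h' j z0) + ∑ i, mu i • g' i z0)
    (hrank : ∀ᶠ z in 𝓝 z0,
      Set.finrank ℝ ((fun i => g' i z) '' J ∪ Set.range (fun j => h' j z)) =
      Set.finrank ℝ ((fun i => g' i z0) '' J ∪ Set.range (fun j => h' j z0))) :
    ∃ α > (0 : ℝ), ∀ᶠ z in 𝓝 z0, ∃ z', (∀ i, g i z' ≤ 0) ∧ (∀ j, h j z' = 0) ∧
      dist z z' ≤ α * ((∑ i, max (g i z) 0) + ∑ j, |h j z|) := by
  classical
  obtain ⟨mu, c, hm1, hm2, hms⟩ :=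
    aux_relation (fun i => g' i z0) (fun j => h' j z0) {i | g i z0 = 0} J hJ
  obtain ⟨d, hdh, hdJ, hdI⟩ :=
    aux_direction (fun i => g' i z0) (fun j => h' j z0) {i | g i z0 = 0} J hJ
  have hJI : ∀ i ∈ J, g i z0 = 0 := fun i hi => ((hJ i).1 hi).1
  -- the joint family
  let Φ : J ⊕ κ → E → ℝ := Sum.elim (fun i => g i.1) h
  let Φ' : J ⊕ κ → E → E := Sum.elim (fun i => g' i.1) h'
  have hΦ : ∀ k z, HasGradientAt (Φ k) (Φ' k z) z := by
    rintro (k | k) z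
    · exact hg _ z
    · exact hh _ z
  have hΦc : ∀ k, Continuous (Φ' k) := by
    rintro (k | k)
    · exact hgc _
    · exact hhc _
  have hΦ0 : ∀ k, Φ k z0 = 0 := by
    rintro (k | k)
    · exact hJI _ k.2
    · exact hh0 _
  have hset : ∀ z, ((fun i => g' i z) '' J ∪ Set.range (fun j => h' j z)) =
      Set.range (fun k => Φ' k z) := by
    intro z
    ext x
    constructor
    · rintro (⟨i, hi, rfl⟩ | ⟨j, rfl⟩)
      · exact ⟨Sum.inl ⟨i, hi⟩, rfl⟩
      · exact ⟨Sum.inr j, rfl⟩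
    · rintro ⟨i | j, rfl⟩
      · exact Or.inl ⟨i.1, i.2, rfl⟩
      · exact Or.inr ⟨j, rfl⟩
  simp only [hset] at hrank
  obtain ⟨B, a, ha, hspan, hli⟩ := exists_linearIndependent' ℝ (fun k => Φ' k z0)
  have : Finite B := Finite.of_injective a ha
  have : Fintype B := Fintype.ofFinite B
  have hli_ev : ∀ᶠ z in 𝓝 z0, LinearIndependent ℝ (fun b => Φ' (a b) z) := by
    have h1 : Continuous (fun z => (fun b => Φ' (a b) z)) :=
      continuous_pi fun b => hΦc (a b)
    exact (h1.tendsto z0).eventually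
      (isOpen_setOfPred_linearIndependent.mem_nhds (show LinearIndependent ℝ _ from hli))
  have hsp : ∀ᶠ z in 𝓝 z0, ∀ k, Φ' k z ∈ Submodule.span ℝ (Set.range fun b => Φ' (a b) z) := by
    filter_upwards [hrank, hli_ev] with z h1 h2 k
    have hle : Submodule.span ℝ (Set.range fun b => Φ' (a b) z) ≤
        Submodule.span ℝ (Set.range fun k => Φ' k z) := by
      apply Submodule.span_mono
      rintro _ ⟨b, rfl⟩
      exact ⟨a b, rfl⟩
    have h3 : Set.finrank ℝ (Set.range fun k => Φ' k z0) = Fintype.card B := by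
      rw [Set.finrank, ← hspan]
      exact finrank_span_eq_card hli
    have h4 := Submodule.eq_of_le_of_finrank_le hle (by
      rw [finrank_span_eq_card h2, ← h3, ← h1]; exact le_rfl)
    rw [h4]
    exact Submodule.subset_span ⟨k, rfl⟩
  obtain ⟨N, Ψ, ψ, hΨ, hψ, hψ0, hΨφ, hleft, hright⟩ :=
    aux_coords (fun b => Φ (a b)) (fun b => Φ' (a b)) z0 (fun b => hΦ (a b))
      (fun b => hΦc (a b)) hli
  have hTh := aux_theta (fun b => Φ (a b)) (fun b => Φ' (a b)) z0 (fun b => hΦ (a b))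
    (fun b => hΦ0 (a b)) N Ψ ψ hψ hψ0 hΨφ hright
  have hΨc : Tendsto Ψ (𝓝 z0) (𝓝 (Ψ z0)) := hΨ.continuous.tendsto z0
  have hΨ1 : (Ψ z0).1 = 0 := by ext b; simp [hΨφ, hΦ0]
  -- F1
  have F1 : ∀ᶠ p in 𝓝 (Ψ z0), ∀ k, p.1 = 0 → Φ k (ψ p) = 0 := by
    rw [eventually_all]
    intro k
    exact (hTh (Φ k) (Φ' k) (hΦ k) (hΦc k) (hsp.mono fun z hz => hz k) (hΦ0 k)).1
  -- F2
  have F2 : ∀ᶠ z in 𝓝 z0, |(∑ i, mu i * g i z) + ∑ j, c j * h j z| ≤ 1 / 2 * ‖(Ψ z).1‖ := by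
    have hgrad : ∀ z, HasGradientAt (fun z => (∑ i, mu i * g i z) + ∑ j, c j * h j z)
        ((∑ i, mu i • g' i z) + ∑ j, c j • h' j z) z := by
      intro z
      rw [hasGradientAt_iff_hasFDerivAt]
      have e1 := HasFDerivAt.fun_sum (u := (Finset.univ : Finset ι)) (x := z)
        (fun i _ => ((hg i z).hasFDerivAt).const_mul (mu i))
      have e2 := HasFDerivAt.fun_sum (u := (Finset.univ : Finset κ)) (x := z)
        (fun i _ => ((hh i z).hasFDerivAt).const_mul (c i))
      refine (e1.add e2).congr_fderiv ?_
      simp [map_add, map_sum]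
    have := (hTh _ _ hgrad (by fun_prop) (by
      filter_upwards [hsp] with z hz
      refine Submodule.add_mem _ (Submodule.sum_mem _ fun i _ => ?_)
        (Submodule.sum_mem _ fun j _ => Submodule.smul_mem _ _ (hz (Sum.inr j)))
      by_cases hi : i ∈ J
      · exact Submodule.smul_mem _ _ (hz (Sum.inl ⟨i, hi⟩))
      · rw [hm2 i hi, zero_smul]; exact Submodule.zero_mem _) (by
      have : ∀ i, mu i * g i z0 = 0 := fun i => by
        by_cases hi : i ∈ J
        · rw [hJI i hi, mul_zero]
        · rw [hm2 i hi, zero_mul]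
      simp [this, hh0])).2 hms (1 / 2) (by norm_num)
    filter_upwards [hΨc.eventually this, hleft] with z h1 h2
    rwa [h2] at h1
  -- F3
  have F3 : ∀ z, ‖(Ψ z).1‖ ≤ (∑ i, if i ∈ J then |g i z| else 0) + ∑ j, |h j z| := by
    intro z
    have n1 : ∀ i, 0 ≤ if i ∈ J then |g i z| else 0 := fun i => by
      split_ifs
      · exact abs_nonneg _
      · exact le_rfl
    have p1 : 0 ≤ ∑ i, if i ∈ J then |g i z| else 0 := Finset.sum_nonneg fun i _ => n1 i
    have p2 : 0 ≤ ∑ j, |h j z| := Finset.sum_nonneg fun i _ => abs_nonneg _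
    rw [pi_norm_le_iff_of_nonneg (add_nonneg p1 p2)]
    intro b
    rw [hΨφ, Real.norm_eq_abs]
    rcases a b with i | j
    · have := Finset.single_le_sum (f := fun i => if i ∈ J then |g i z| else 0)
        (fun i _ => n1 i) (Finset.mem_univ i.1)
      simp only [i.2, if_true] at this
      show |g i.1 z| ≤ _
      linarith
    · have := Finset.single_le_sum (f := fun j => |h j z|)
        (fun i _ => abs_nonneg _) (Finset.mem_univ j)
      show |h j z| ≤ _
      linarith
  have hmu0 : ∀ i, 0 ≤ mu i := fun i => by
    by_cases hi : i ∈ J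
    · linarith [hm1 i hi]
    · rw [hm2 i hi]
  set res : E → ℝ := fun z => (∑ i, max (g i z) 0) + ∑ j, |h j z| with hres
  have hP0 : ∀ z, 0 ≤ ∑ i, max (g i z) 0 := fun z => Finset.sum_nonneg fun _ _ => le_max_right _ _
  have hQ0 : ∀ z, 0 ≤ ∑ j, |h j z| := fun z => Finset.sum_nonneg fun _ _ => abs_nonneg _
  -- F4
  obtain ⟨C1, hC1, F4⟩ : ∃ C1 : ℝ, 0 ≤ C1 ∧ ∀ᶠ z in 𝓝 z0, ‖(Ψ z).1‖ ≤ C1 * res z := by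
    have hM0 : 0 ≤ ∑ i, mu i := Finset.sum_nonneg fun i _ => hmu0 i
    have hL0 : 0 ≤ ∑ j, |c j| := Finset.sum_nonneg fun i _ => abs_nonneg _
    refine ⟨4 * (∑ i, mu i) + 2 + 2 * ∑ j, |c j|, by positivity, ?_⟩
    filter_upwards [F2] with z h2
    have h3 := F3 z
    set X := ∑ i, if i ∈ J then |g i z| else 0 with hX
    have e1 : X ≤ ∑ i, (2 * (mu i * max (g i z) 0) - mu i * g i z) := by
      refine Finset.sum_le_sum fun i _ => ?_
      have e : 2 * (mu i * max (g i z) 0) - mu i * g i z = mu i * |g i z| := by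
        rcases le_total 0 (g i z) with h | h
        · rw [max_eq_left h, abs_of_nonneg h]; ring
        · rw [max_eq_right h, abs_of_nonpos h]; ring
      rw [e]
      split_ifs with hi
      · nlinarith [hm1 i hi, abs_nonneg (g i z)]
      · exact mul_nonneg (hmu0 i) (abs_nonneg _)
    rw [Finset.sum_sub_distrib, ← Finset.mul_sum] at e1
    have e2 : ∑ i, mu i * max (g i z) 0 ≤ (∑ i, mu i) * ∑ i, max (g i z) 0 := by
      rw [Finset.sum_mul]
      refine Finset.sum_le_sum fun i _ => mul_le_mul_of_nonneg_left ?_ (hmu0 i)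
      exact Finset.single_le_sum (f := fun i => max (g i z) 0) (fun _ _ => le_max_right _ _)
        (Finset.mem_univ i)
    have e3 : ∑ j, c j * h j z ≤ (∑ j, |c j|) * ∑ j, |h j z| := by
      rw [Finset.sum_mul]
      refine Finset.sum_le_sum fun j _ => ?_
      refine (le_abs_self _).trans ?_
      rw [abs_mul]
      refine mul_le_mul_of_nonneg_left ?_ (abs_nonneg _)
      exact Finset.single_le_sum (f := fun j => |h j z|) (fun _ _ => abs_nonneg _)
        (Finset.mem_univ j)
    have e4 := neg_abs_le ((∑ i, mu i * g i z) + ∑ j, c j * h j z)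
    simp only [hres]
    have hp := hP0 z
    have hq := hQ0 z
    nlinarith [mul_nonneg hM0 hq, mul_nonneg hL0 hp]
  -- direction in the coordinates
  let DΨ := fderiv ℝ Ψ z0
  have hDΨ : HasFDerivAt Ψ DΨ z0 := (hΨ.differentiable one_ne_zero z0).hasFDerivAt
  let dh : N := (DΨ d).2
  have hd1 : (DΨ d).1 = 0 := by
    ext b
    let L : ((B → ℝ) × N) →L[ℝ] ℝ :=
      (ContinuousLinearMap.proj b).comp (ContinuousLinearMap.fst ℝ (B → ℝ) N)
    have e1 : HasFDerivAt (fun z => L (Ψ z)) (L.comp DΨ) z0 := L.hasFDerivAt.comp z0 hDΨ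
    have e2 : (fun z => L (Ψ z)) = Φ (a b) := by
      ext z; exact hΨφ z b
    rw [e2] at e1
    have := congrArg (fun T : E →L[ℝ] ℝ => T d) (e1.unique (hΦ (a b) z0).hasFDerivAt)
    have h3 : (DΨ d).1 b = ⟪Φ' (a b) z0, d⟫_ℝ := by simpa [L] using this
    rw [h3]
    rcases a b with i | j
    · exact hdJ i.1 i.2
    · exact hdh j
  have hdd : DΨ d = (0, dh) := Prod.ext hd1 rfl
  have hψd : HasFDerivAt ψ (fderiv ℝ ψ (Ψ z0)) (Ψ z0) :=
    (hψ.differentiableAt one_ne_zero).hasFDerivAt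
  have hinv : fderiv ℝ ψ (Ψ z0) (0, dh) = d := by
    have e1 : HasFDerivAt (fun z => ψ (Ψ z)) ((fderiv ℝ ψ (Ψ z0)).comp DΨ) z0 := hψd.comp z0 hDΨ
    have e2 : HasFDerivAt (fun z => ψ (Ψ z)) (ContinuousLinearMap.id ℝ E) z0 :=
      (hasFDerivAt_id z0).congr_of_eventuallyEq hleft
    have := congrArg (fun T : E →L[ℝ] E => T d) (e1.unique e2)
    simpa [hdd] using this
  -- strict differentiability of the inequality constraints
  let D : ι → ((B → ℝ) × N) →L[ℝ] ℝ := fun i =>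
    (InnerProductSpace.toDual ℝ E (g' i z0) : E →L[ℝ] ℝ).comp (fderiv ℝ ψ (Ψ z0))
  have hDst : ∀ i, HasStrictFDerivAt (fun p => g i (ψ p)) (D i) (Ψ z0) := by
    intro i
    have hcd : ContDiffAt ℝ 1 (fun p => g i (ψ p)) (Ψ z0) :=
      ((aux_contDiff (hg i) (hgc i)).contDiffAt).comp _ hψ
    refine hcd.hasStrictFDerivAt' ?_ one_ne_zero
    have := hg i z0
    rw [← hψ0] at this
    have h2 := this.hasFDerivAt.comp (Ψ z0) hψd
    rw [hψ0] at h2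
    exact h2
  have hDd : ∀ i, D i (0, dh) = ⟪g' i z0, d⟫_ℝ := by
    intro i; simp [D, hinv]
  let ε : ℝ := (1 + ‖dh‖)⁻¹
  have hε : 0 < ε := by positivity
  have hεd : ε * ‖dh‖ ≤ 1 := by
    have : ε * (1 + ‖dh‖) = 1 := inv_mul_cancel₀ (by positivity)
    nlinarith
  let L : ℝ := (∑ i, ‖D i‖) + ε
  have hL0 : 0 ≤ L := add_nonneg (Finset.sum_nonneg fun i _ => norm_nonneg (D i)) hε.le
  have hLi : ∀ i, ‖D i‖ + ε ≤ L := fun i => by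
    have := Finset.single_le_sum (f := fun i => ‖D i‖) (fun i _ => norm_nonneg (D i))
      (Finset.mem_univ i)
    simp only [L]; linarith
  let t : E → ℝ := fun z => (∑ i, max (g i z) 0) + L * ‖(Ψ z).1‖
  have ht0 : ∀ z, 0 ≤ t z := fun z => add_nonneg (hP0 z) (mul_nonneg hL0 (norm_nonneg _))
  have hgcont : ∀ i, Continuous (g i) := fun i => (aux_contDiff (hg i) (hgc i)).continuous
  have hΨcont : Continuous Ψ := hΨ.continuous
  have htc : Continuous t := by
    have : Continuous fun z => (Ψ z).1 := continuous_fst.comp hΨcont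
    fun_prop
  have htz : t z0 = 0 := by
    simp [t, hΨ1, hg0]
  let p' : E → (B → ℝ) × N := fun z => (0, (Ψ z).2 + t z • dh)
  have hp'c : Tendsto p' (𝓝 z0) (𝓝 (Ψ z0)) := by
    have h1 : Continuous p' := by
      have : Continuous fun z => (Ψ z).2 := continuous_snd.comp hΨcont
      fun_prop
    have h2 := h1.tendsto z0
    have h3 : p' z0 = Ψ z0 := by
      ext1
      · exact hΨ1.symm
      · simp [p', htz]
    rwa [h3] at h2
  have hpair : Tendsto (fun z => (p' z, Ψ z)) (𝓝 z0) (𝓝 (Ψ z0, Ψ z0)) := hp'c.prodMk_nhds hΨc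
  have hnorm : ∀ z, ‖p' z - Ψ z‖ ≤ ‖(Ψ z).1‖ + t z * ‖dh‖ := by
    intro z
    have : p' z - Ψ z = (-(Ψ z).1, t z • dh) := by ext1 <;> simp [p']
    rw [this, Prod.norm_def]
    simp only [norm_neg, norm_smul, Real.norm_eq_abs, abs_of_nonneg (ht0 z)]
    exact max_le (by have := mul_nonneg (ht0 z) (norm_nonneg dh); linarith)
      (by have := norm_nonneg (Ψ z).1; linarith)
  have G1 : ∀ᶠ z in 𝓝 z0, ∀ i, g i (ψ (p' z)) ≤ 0 := by
    rw [eventually_all]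
    intro i
    by_cases hi0 : g i z0 = 0
    · by_cases hiJ : i ∈ J
      · filter_upwards [hp'c.eventually F1] with z hz
        exact (hz (Sum.inl ⟨i, hiJ⟩) rfl).le
      · have := (hDst i).isLittleO.def hε
        filter_upwards [hpair.eventually this, hleft] with z h1 h2
        simp only [h2] at h1
        have h3 : p' z - Ψ z = t z • ((0 : B → ℝ), dh) - ((Ψ z).1, 0) := by
          ext1 <;> simp [p']
        have h4 : D i (p' z - Ψ z) = t z * ⟪g' i z0, d⟫_ℝ - D i ((Ψ z).1, 0) := by
          rw [h3, map_sub, map_smul, hDd, smul_eq_mul]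
        have h5 : |D i ((Ψ z).1, 0)| ≤ ‖D i‖ * ‖(Ψ z).1‖ := by
          have := (D i).le_opNorm ((Ψ z).1, 0)
          simpa [Prod.norm_def] using this
        have h6 := hdI i hi0 hiJ
        have h7 := (le_abs_self _).trans h1
        have h8 := mul_le_mul_of_nonneg_left (hnorm z) hε.le
        have h9 := mul_le_mul_of_nonneg_left h6 (ht0 z)
        have h10 := (abs_le.1 h5).1
        have h11 := mul_le_mul_of_nonneg_right (hLi i) (norm_nonneg (Ψ z).1)
        have h12 := mul_le_mul_of_nonneg_left hεd (ht0 z)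
        have h13 : g i z + L * ‖(Ψ z).1‖ ≤ t z := by
          have := Finset.single_le_sum (f := fun i => max (g i z) 0)
            (fun _ _ => le_max_right _ _) (Finset.mem_univ i)
          have h := le_max_left (g i z) 0
          simp only [t]
          linarith
        rw [h4] at h7
        nlinarith
    · have hlt : g i z0 < 0 := lt_of_le_of_ne (hg0 i) hi0
      have hψt : Tendsto (fun z => g i (ψ (p' z))) (𝓝 z0) (𝓝 (g i z0)) := by
        have h1 := hψ.continuousAt.tendsto
        rw [hψ0] at h1
        exact ((hgcont i).tendsto z0).comp (h1.comp hp'c)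
      filter_upwards [hψt.eventually (gt_mem_nhds hlt)] with z hz using hz.le
  have G2 : ∀ᶠ z in 𝓝 z0, ∀ j, h j (ψ (p' z)) = 0 := by
    filter_upwards [hp'c.eventually F1] with z hz j
    exact hz (Sum.inr j) rfl
  obtain ⟨K, s, hs, hK⟩ := (hψ.hasStrictFDerivAt one_ne_zero).exists_lipschitzOnWith
  refine ⟨K * (C1 + (1 + L * C1) * ‖dh‖) + 1, by positivity, ?_⟩
  filter_upwards [G1, G2, F4, hleft, hp'c.eventually hs, hΨc.eventually hs] with z h1 h2 h3 h4 h5 h6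
  refine ⟨ψ (p' z), h1, h2, ?_⟩
  have e1 := hK.dist_le_mul (Ψ z) h6 (p' z) h5
  rw [h4] at e1
  have e2 : dist (Ψ z) (p' z) ≤ ‖(Ψ z).1‖ + t z * ‖dh‖ := by
    rw [dist_comm, dist_eq_norm]; exact hnorm z
  have hr0 : 0 ≤ res z := add_nonneg (hP0 z) (hQ0 z)
  have e3 : t z ≤ (1 + L * C1) * res z := by
    have := mul_le_mul_of_nonneg_left h3 hL0
    have hq := hQ0 z
    simp only [t, hres] at *
    nlinarith
  have e4 : ‖(Ψ z).1‖ + t z * ‖dh‖ ≤ (C1 + (1 + L * C1) * ‖dh‖) * res z := by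
    have := mul_le_mul_of_nonneg_right e3 (norm_nonneg dh)
    nlinarith
  have e5 := mul_le_mul_of_nonneg_left (e2.trans e4) K.2
  show dist z (ψ (p' z)) ≤ _ * res z
  calc dist z (ψ (p' z)) ≤ K * dist (Ψ z) (p' z) := e1
    _ ≤ K * ((C1 + (1 + L * C1) * ‖dh‖) * res z) := e5
    _ ≤ _ := by nlinarith

end Aux

theorem aux_sum_subtype {ι E : Type*} [Fintype ι] [AddCommGroup E] [Module ℝ E] (s : Set ι)
    [Fintype {i // i ∈ s}]
    (c : ι → ℝ) (f : ι → E) (hc : ∀ i, i ∉ s → c i = 0) :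
    ∑ i, c i • f i = ∑ x : {i // i ∈ s}, c x.1 • f x.1 := by
  classical
  rw [← Finset.sum_filter_of_ne (p := fun i => i ∈ s),
    Finset.sum_subtype (p := fun i => i ∈ s)]
  · intro i; simp
  · intro i _ hi
    by_contra h
    exact hi (by rw [hc i h, zero_smul])

theorem aux_sum_if {ι : Type*} [Fintype ι] (s : Set ι) [Fintype {i // i ∈ s}] (f : ι → ℝ) :
    ∑ x : {i // i ∈ s}, f x.1 = ∑ i, s.indicator f i := by
  classical
  simp only [Set.indicator_apply]
  rw [← Finset.sum_filter, Finset.sum_subtype (p := fun i => i ∈ s)]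
  intro i
  simp

theorem aux_branch {n p q m : ℕ} (P : MPSC n p q m) (zs : Euc n) (hfeas : zs ∈ P.Feas)
    (b1 b2 : Set (Fin m)) (hb : b1 ∪ b2 = P.IGH zs) (hcr : P.CRSCpiece zs b1 b2) :
    ∃ α > (0 : ℝ), ∀ᶠ z in 𝓝 zs, ∃ z', (∀ i, P.g i z' ≤ 0) ∧ (∀ j, P.h j z' = 0) ∧
      (∀ i ∈ P.IGs zs ∪ b1, P.G i z' = 0) ∧ (∀ i ∈ P.IHs zs ∪ b2, P.H i z' = 0) ∧
      dist z z' ≤ α * ((∑ i, max (P.g i z) 0) + ((∑ j, |P.h j z|) +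
        ((∑ i, (P.IGs zs ∪ b1).indicator (fun i => |P.G i z|) i) +
          ∑ i, (P.IHs zs ∪ b2).indicator (fun i => |P.H i z|) i))) := by
  let κ := Fin q ⊕ ({i // i ∈ P.IGs zs ∪ b1} ⊕ {i // i ∈ P.IHs zs ∪ b2})
  let h : κ → Euc n → ℝ := Sum.elim P.h (Sum.elim (fun i => P.G i.1) (fun i => P.H i.1))
  let h' : κ → Euc n → Euc n := Sum.elim P.h' (Sum.elim (fun i => P.G' i.1) (fun i => P.H' i.1))
  have hb1 : ∀ i ∈ b1, i ∈ P.IGH zs := fun i hi => hb ▸ Or.inl hi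
  have hb2 : ∀ i ∈ b2, i ∈ P.IGH zs := fun i hi => hb ▸ Or.inr hi
  have hset : ∀ z, P.EqGrads zs b1 b2 z = Set.range (fun k => h' k z) := by
    intro z
    ext x
    constructor
    · rintro ((⟨j, rfl⟩ | ⟨i, hi, rfl⟩) | ⟨i, hi, rfl⟩)
      · exact ⟨Sum.inl j, rfl⟩
      · exact ⟨Sum.inr (Sum.inl ⟨i, hi⟩), rfl⟩
      · exact ⟨Sum.inr (Sum.inr ⟨i, hi⟩), rfl⟩
    · rintro ⟨j | i | i, rfl⟩
      · exact Or.inl (Or.inl ⟨j, rfl⟩)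
      · exact Or.inl (Or.inr ⟨i.1, i.2, rfl⟩)
      · exact Or.inr ⟨i.1, i.2, rfl⟩
  obtain ⟨U, hU, hUr⟩ := hcr
  obtain ⟨α, hα, hev⟩ := aux_nlp P.g P.g' h h' zs P.grad_g P.cont_g'
    (by rintro (j | i | i) z
        · exact P.grad_h j z
        · exact P.grad_G i.1 z
        · exact P.grad_H i.1 z)
    (by rintro (j | i | i)
        · exact P.cont_h' j
        · exact P.cont_G' i.1
        · exact P.cont_H' i.1)
    hfeas.1
    (by rintro (j | ⟨i, hi⟩ | ⟨i, hi⟩)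
        · exact hfeas.2.1 j
        · rcases hi with hi | hi
          · exact hi.1
          · exact (hb1 i hi).1
        · rcases hi with hi | hi
          · exact hi.2
          · exact (hb2 i hi).2)
    (P.Iminus zs b1 b2)
    (by
      intro l
      constructor
      · rintro ⟨hl, lh, lG, lH, mu, h1, h2, h3, h4, h5⟩
        refine ⟨hl, Sum.elim lh (Sum.elim (fun i => lG i.1) (fun i => lH i.1)), mu, h3, h4, ?_⟩
        rw [h5, Fintype.sum_sum_type, Fintype.sum_sum_type, Finset.sum_add_distrib,
          aux_sum_subtype (P.IGs zs ∪ b1) lG (fun i => P.G' i zs) h1,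
          aux_sum_subtype (P.IHs zs ∪ b2) lH (fun i => P.H' i zs) h2]
        rfl
      · rintro ⟨hl, c, mu, h3, h4, h5⟩
        refine ⟨hl, fun j => c (Sum.inl j),
          fun i => if hi : i ∈ P.IGs zs ∪ b1 then c (Sum.inr (Sum.inl ⟨i, hi⟩)) else 0,
          fun i => if hi : i ∈ P.IHs zs ∪ b2 then c (Sum.inr (Sum.inr ⟨i, hi⟩)) else 0,
          mu, fun i hi => dif_neg hi, fun i hi => dif_neg hi, h3, h4, ?_⟩
        rw [h5, Fintype.sum_sum_type, Fintype.sum_sum_type, Finset.sum_add_distrib,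
          aux_sum_subtype (P.IGs zs ∪ b1) _ (fun i => P.G' i zs) (fun i hi => dif_neg hi),
          aux_sum_subtype (P.IHs zs ∪ b2) _ (fun i => P.H' i zs) (fun i hi => dif_neg hi)]
        congr 2
        congr 1
        · exact Finset.sum_congr rfl fun i _ => by rw [dif_pos i.2]; rfl
        · exact Finset.sum_congr rfl fun i _ => by rw [dif_pos i.2]; rfl)
    (by
      filter_upwards [hU] with z hz
      have := hUr z hz
      rwa [hset, hset] at this)
  refine ⟨α, hα, ?_⟩
  filter_upwards [hev] with z hz
  obtain ⟨z', h1, h2, h3⟩ := hz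
  refine ⟨z', h1, fun j => h2 (Sum.inl j), fun i hi => h2 (Sum.inr (Sum.inl ⟨i, hi⟩)),
    fun i hi => h2 (Sum.inr (Sum.inr ⟨i, hi⟩)), ?_⟩
  rw [Fintype.sum_sum_type, Fintype.sum_sum_type] at h3
  rw [← aux_sum_if (P.IGs zs ∪ b1) (fun i => |P.G i z|),
    ← aux_sum_if (P.IHs zs ∪ b2) (fun i => |P.H i z|)]
  exact h3

/-- MPSC piecewise CRSC implies the MPSC local error bound. -/
theorem mpsc_piecewiseCRSC_errorBound {n p q m : ℕ} (P : MPSC n p q m) (zs : Euc n)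
    (hfeas : zs ∈ P.Feas) (hcrsc : P.PiecewiseCRSC zs) :
    P.ErrorBound zs := by
  have key : ∀ s : Set (Fin m), ∃ α > (0 : ℝ), ∀ᶠ z in 𝓝 zs,
      ∃ z', (∀ i, P.g i z' ≤ 0) ∧ (∀ j, P.h j z' = 0) ∧
      (∀ i ∈ P.IGs zs ∪ (P.IGH zs ∩ s), P.G i z' = 0) ∧
      (∀ i ∈ P.IHs zs ∪ (P.IGH zs \ s), P.H i z' = 0) ∧
      dist z z' ≤ α * ((∑ i, max (P.g i z) 0) + ((∑ j, |P.h j z|) +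
        ((∑ i, (P.IGs zs ∪ (P.IGH zs ∩ s)).indicator (fun i => |P.G i z|) i) +
          ∑ i, (P.IHs zs ∪ (P.IGH zs \ s)).indicator (fun i => |P.H i z|) i))) := by
    intro s
    have hu : (P.IGH zs ∩ s) ∪ (P.IGH zs \ s) = P.IGH zs := Set.inter_union_sdiff _ _
    have hd : (P.IGH zs ∩ s) ∩ (P.IGH zs \ s) = ∅ := by
      ext i
      simp only [Set.mem_inter_iff, Set.mem_sdiff, Set.mem_empty_iff_false, iff_false]
      tauto
    exact aux_branch P zs hfeas _ _ hu (hcrsc _ _ hu hd)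
  choose α hα hev using key
  have hGc : ∀ i, Continuous (P.G i) := fun i =>
    (aux_contDiff (P.grad_G i) (P.cont_G' i)).continuous
  have hHc : ∀ i, Continuous (P.H i) := fun i =>
    (aux_contDiff (P.grad_H i) (P.cont_H' i)).continuous
  have hlt : ∀ᶠ z in 𝓝 zs, ∀ i, (i ∈ P.IGs zs → |P.G i z| ≤ |P.H i z|) ∧
      (i ∈ P.IHs zs → |P.H i z| ≤ |P.G i z|) := by
    rw [eventually_all]
    intro i
    refine Filter.Eventually.and ?_ ?_
    · by_cases hi : i ∈ P.IGs zs
      · have h1 : |P.G i zs| < |P.H i zs| := by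
          rw [hi.1, abs_zero]; exact abs_pos.2 hi.2
        filter_upwards [((hGc i).abs.continuousAt).eventually_lt ((hHc i).abs.continuousAt) h1]
          with z hz _ using hz.le
      · exact Eventually.of_forall fun z h => absurd h hi
    · by_cases hi : i ∈ P.IHs zs
      · have h1 : |P.H i zs| < |P.G i zs| := by
          rw [hi.2, abs_zero]; exact abs_pos.2 hi.1
        filter_upwards [((hHc i).abs.continuousAt).eventually_lt ((hGc i).abs.continuousAt) h1]
          with z hz _ using hz.le
      · exact Eventually.of_forall fun z h => absurd h hi
  have hall := (eventually_all.2 hev).and hlt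
  have hsum : ∀ s, α s ≤ ∑ s, α s := fun s =>
    Finset.single_le_sum (f := α) (fun s _ => (hα s).le) (Finset.mem_univ s)
  refine ⟨_, hall, ∑ s, α s, lt_of_lt_of_le (hα ∅) (hsum ∅), ?_⟩
  rintro z ⟨hz1, hz2⟩
  set s : Set (Fin m) := {i | |P.G i z| ≤ |P.H i z|} with hs
  obtain ⟨z', h1, h2, h3, h4, h5⟩ := hz1 s
  have hz' : z' ∈ P.Feas := by
    refine ⟨h1, h2, fun i => ?_⟩
    by_cases hG : P.G i zs = 0
    · by_cases hH : P.H i zs = 0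
      · by_cases hi : i ∈ s
        · rw [h3 i (Or.inr ⟨⟨hG, hH⟩, hi⟩), zero_mul]
        · rw [h4 i (Or.inr ⟨⟨hG, hH⟩, hi⟩), mul_zero]
      · rw [h3 i (Or.inl ⟨hG, hH⟩), zero_mul]
    · have hH : P.H i zs = 0 := (mul_eq_zero.1 (hfeas.2.2 i)).resolve_left hG
      rw [h4 i (Or.inl ⟨hG, hH⟩), mul_zero]
  refine (Metric.infDist_le_dist_of_mem hz').trans (h5.trans ?_)
  have e3 : (∑ i, (P.IGs zs ∪ (P.IGH zs ∩ s)).indicator (fun i => |P.G i z|) i) +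
      (∑ i, (P.IHs zs ∪ (P.IGH zs \ s)).indicator (fun i => |P.H i z|) i)
      ≤ ∑ i, min |P.G i z| |P.H i z| := by
    rw [← Finset.sum_add_distrib]
    refine Finset.sum_le_sum fun i _ => ?_
    have hmin0 : 0 ≤ min |P.G i z| |P.H i z| := le_min (abs_nonneg _) (abs_nonneg _)
    by_cases hA : i ∈ P.IGs zs ∪ (P.IGH zs ∩ s)
    · have hB : i ∉ P.IHs zs ∪ (P.IGH zs \ s) := by
        rcases hA with hA | hA
        · rintro (hB | hB)
          · exact hB.1 hA.1
          · exact hA.2 hB.1.2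
        · rintro (hB | hB)
          · exact hB.1 hA.1.1
          · exact hB.2 hA.2
      rw [Set.indicator_of_mem hA, Set.indicator_of_notMem hB, add_zero]
      refine le_min le_rfl ?_
      rcases hA with hA | hA
      · exact (hz2 i).1 hA
      · exact hA.2
    · rw [Set.indicator_of_notMem hA, zero_add]
      by_cases hB : i ∈ P.IHs zs ∪ (P.IGH zs \ s)
      · rw [Set.indicator_of_mem hB]
        refine le_min ?_ le_rfl
        rcases hB with hB | hB
        · exact (hz2 i).2 hB
        · exact (not_le.1 hB.2).le
      · rw [Set.indicator_of_notMem hB]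
        exact hmin0
  have hp : 0 ≤ ∑ i, max (P.g i z) 0 := Finset.sum_nonneg fun _ _ => le_max_right _ _
  have hq : 0 ≤ ∑ j, |P.h j z| := Finset.sum_nonneg fun _ _ => abs_nonneg _
  have hr : 0 ≤ ∑ i, min |P.G i z| |P.H i z| :=
    Finset.sum_nonneg fun _ _ => le_min (abs_nonneg _) (abs_nonneg _)
  have hres : 0 ≤ P.residual z := add_nonneg (add_nonneg hp hq) hr
  refine le_trans (mul_le_mul_of_nonneg_left ?_ (hα s).le)
    (mul_le_mul_of_nonneg_right (hsum s) hres)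
  unfold MPSC.residual
  linarith
end
end

section
/- Let z* ∈ F. Suppose that for every bipartition (β₁, β₂) of I_GH* (β₁ ∪ β₂ = I_GH*, β₁ ∩ β₂ = ∅) there exist a neighborhood V_{β₁,β₂} of z* and a constant α_{β₁,β₂} > 0 such that dist(z, F) ≤ α_{β₁,β₂}(Σ_{i=1}^p max{g_i(z),0} + Σ_{j=1}^q |h_j(z)| + Σ_{i∈I_G*∪β₁} |G_i(z)| + Σ_{i∈I_H*∪β₂} |H_i(z)|) for all z ∈ V_{β₁,β₂}. Then the MPSC local error bound holds around z*: there exist a neighborhood V of z* and α > 0 such that dist(z, F) ≤ α(Σ_{i=1}^p max{g_i(z),0} + Σ_{j=1}^q |h_j(z)| + Σ_{i=1}^m min{|G_i(z)|, |H_i(z)|}) for all z ∈ V. -/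
open scoped Classical InnerProductSpace
open Filter Topology

noncomputable section

/-- branchwise error bounds for all bipartitions of `I_GH*` imply the
MPSC local error bound. -/
theorem mpsc_branch_errorBounds_imply_errorBound {n p q m : ℕ} (P : MPSC n p q m)
    (zs : Euc n) (hfeas : zs ∈ P.Feas)
    (hyp : ∀ b1 b2 : Set (Fin m), b1 ∪ b2 = P.IGH zs → b1 ∩ b2 = ∅ →
      ∃ V ∈ 𝓝 zs, ∃ α > (0 : ℝ), ∀ z ∈ V,
        Metric.infDist z P.Feas ≤
          α * ((∑ i, max (P.g i z) 0) + (∑ j, |P.h j z|)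
            + (∑ i ∈ Finset.univ.filter (fun i => i ∈ P.IGs zs ∪ b1), |P.G i z|)
            + (∑ i ∈ Finset.univ.filter (fun i => i ∈ P.IHs zs ∪ b2), |P.H i z|))) :
    P.ErrorBound zs := by
  have hu : ∀ b : Set (Fin m), (P.IGH zs ∩ b) ∪ (P.IGH zs \ b) = P.IGH zs :=
    fun b => Set.inter_union_sdiff _ _
  have hi : ∀ b : Set (Fin m), (P.IGH zs ∩ b) ∩ (P.IGH zs \ b) = ∅ := by
    intro b
    ext i
    simp only [Set.mem_inter_iff, Set.mem_sdiff, Set.mem_empty_iff_false]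
    tauto
  have key := fun b : Set (Fin m) => hyp _ _ (hu b) (hi b)
  choose V hV α hα hb using key
  have hG : ∀ i, ContinuousAt (fun z => |P.G i z|) zs := fun i =>
    ((P.grad_G i zs).hasFDerivAt.continuousAt).abs
  have hH : ∀ i, ContinuousAt (fun z => |P.H i z|) zs := fun i =>
    ((P.grad_H i zs).hasFDerivAt.continuousAt).abs
  have h1 : ∀ i, ∀ᶠ z in 𝓝 zs, i ∈ P.IGs zs → |P.G i z| ≤ |P.H i z| := by
    intro i
    by_cases hi : i ∈ P.IGs zs
    · have h : |P.G i zs| < |P.H i zs| := by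
        rw [hi.1, abs_zero]
        exact abs_pos.mpr hi.2
      filter_upwards [(hG i).eventually_lt (hH i) h] with z hz _ using hz.le
    · exact Eventually.of_forall fun z h => absurd h hi
  have h2 : ∀ i, ∀ᶠ z in 𝓝 zs, i ∈ P.IHs zs → |P.H i z| ≤ |P.G i z| := by
    intro i
    by_cases hi : i ∈ P.IHs zs
    · have h : |P.H i zs| < |P.G i zs| := by
        rw [hi.2, abs_zero]
        exact abs_pos.mpr hi.1
      filter_upwards [(hH i).eventually_lt (hG i) h] with z hz _ using hz.le
    · exact Eventually.of_forall fun z h => absurd h hi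
  have hall : ∀ᶠ z in 𝓝 zs, (∀ b, z ∈ V b) ∧ (∀ i, i ∈ P.IGs zs → |P.G i z| ≤ |P.H i z|) ∧
      (∀ i, i ∈ P.IHs zs → |P.H i z| ≤ |P.G i z|) :=
    (eventually_all.mpr hV).and ((eventually_all.mpr h1).and (eventually_all.mpr h2))
  refine ⟨_, hall, ∑ b, α b, Finset.sum_pos (fun b _ => hα b) Finset.univ_nonempty, ?_⟩
  rintro z ⟨hzV, hz1, hz2⟩
  have hres : 0 ≤ P.residual z := by
    unfold MPSC.residual
    have a1 : 0 ≤ ∑ i, max (P.g i z) 0 := Finset.sum_nonneg fun i _ => le_max_right _ _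
    have a2 : 0 ≤ ∑ j, |P.h j z| := Finset.sum_nonneg fun i _ => abs_nonneg _
    have a3 : 0 ≤ ∑ i, min |P.G i z| |P.H i z| :=
      Finset.sum_nonneg fun i _ => le_min (abs_nonneg _) (abs_nonneg _)
    linarith
  set b : Set (Fin m) := {i | |P.G i z| ≤ |P.H i z|} with hbdef
  have hle : α b ≤ ∑ b, α b :=
    Finset.single_le_sum (f := α) (fun b _ => (hα b).le) (Finset.mem_univ b)
  refine ((hb b z (hzV b)).trans ?_).trans (mul_le_mul_of_nonneg_right hle hres)
  refine mul_le_mul_of_nonneg_left ?_ (hα b).le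
  unfold MPSC.residual
  rw [add_assoc _ (∑ i ∈ _, _) (∑ i ∈ _, _)]
  refine add_le_add le_rfl ?_
  rw [Finset.sum_filter, Finset.sum_filter, ← Finset.sum_add_distrib]
  refine Finset.sum_le_sum fun i _ => ?_
  have c1 := hz1 i
  have c2 := hz2 i
  have n1 := abs_nonneg (P.G i z)
  have n2 := abs_nonneg (P.H i z)
  simp only [hbdef, MPSC.IGs, MPSC.IHs, MPSC.IGH, Set.mem_union, Set.mem_inter_iff, Set.mem_sdiff,
    Set.mem_ofPred_eq] at c1 c2 ⊢
  clear hb hzV hz1 hz2 hres hle hall h1 h2 hG hH hV hyp hu hi hα hfeas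
  clear hbdef b
  clear V α
  by_cases hle : |P.G i z| ≤ |P.H i z|
  · rw [min_eq_left hle]
    by_cases e1 : P.G i zs = 0 <;> by_cases e2 : P.H i zs = 0 <;>
      simp [e1, e2, hle] at c1 c2 ⊢ <;> linarith
  · have hle' := (not_le.mp hle).le
    rw [min_eq_right hle']
    by_cases e1 : P.G i zs = 0 <;> by_cases e2 : P.H i zs = 0 <;>
      simp [e1, e2, hle] at c1 c2 ⊢ <;> linarith
end
end

section
/- Let z* ∈ F be a feasible point of the MPSC at which MPSC directional quasi-normality holds. Then the MPSC local error bound holds in a neighborhood of z*: there exist a neighborhood V of z* and α > 0 such that dist(z, F) ≤ α(Σ_{i=1}^p max{g_i(z),0} + Σ_{j=1}^q |h_j(z)| + Σ_{i=1}^m min{|G_i(z)|, |H_i(z)|}) for all z ∈ V. -/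
open scoped Classical InnerProductSpace
open Filter Topology

noncomputable section

/-! ### Helper lemmas -/

theorem aux_max_sq (a : ℝ) : HasDerivAt (fun x : ℝ => (max x 0) ^ 2) (2 * max a 0) a := by
  rcases lt_trichotomy a 0 with ha | ha | ha
  · rw [max_eq_right ha.le, mul_zero]
    refine (hasDerivAt_const a (0 : ℝ)).congr_of_eventuallyEq ?_
    filter_upwards [eventually_lt_nhds ha] with x hx
    simp [max_eq_right hx.le]
  · subst ha
    rw [hasDerivAt_iff_tendsto_slope]
    have h : Tendsto (fun x : ℝ => max x 0) (𝓝[≠] (0 : ℝ)) (𝓝 (2 * max (0 : ℝ) 0)) := by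
      have : Continuous (fun x : ℝ => max x 0) := by fun_prop
      simpa using (this.tendsto 0).mono_left nhdsWithin_le_nhds
    refine h.congr' ?_
    filter_upwards [self_mem_nhdsWithin] with x hx
    have hx' : x ≠ 0 := hx
    rw [slope_def_field]
    rcases le_total x 0 with h0 | h0
    · simp [max_eq_right h0]
    · simp only [max_eq_left h0, max_self, sub_zero]
      field_simp
      ring
  · rw [max_eq_left ha.le]
    have := (hasDerivAt_pow 2 a)
    refine HasDerivAt.congr_of_eventuallyEq (f := fun x : ℝ => x ^ 2) (by simpa using this) ?_
    filter_upwards [eventually_gt_nhds ha] with x hx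
    simp [max_eq_left hx.le]

theorem aux_slope {n : ℕ} {F : Euc n → ℝ} {w y : Euc n} {ε : ℝ} (hε0 : 0 ≤ ε)
    (hF : HasGradientAt F w y) (hmin : ∀ x, F y ≤ F x + ε * ‖x - y‖) : ‖w‖ ≤ ε := by
  have hε := (hasGradientAt_iff_hasFDerivAt.1 hF).lim_real (-w)
  rw [InnerProductSpace.toDual_apply_apply] at hε
  have hb : -(ε * ‖w‖) ≤ ⟪w, -w⟫_ℝ := by
    refine ge_of_tendsto hε ?_
    filter_upwards [eventually_gt_atTop (0 : ℝ)] with c hc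
    have h1 := hmin (y + c⁻¹ • (-w))
    rw [add_sub_cancel_left, norm_smul, norm_neg, Real.norm_of_nonneg (by positivity)] at h1
    have h2 : -(ε * (c⁻¹ * ‖w‖)) ≤ F (y + c⁻¹ • (-w)) - F y := by linarith
    have h3 := mul_le_mul_of_nonneg_left h2 hc.le
    rw [smul_eq_mul]
    refine le_trans (le_of_eq ?_) h3
    field_simp
  rw [inner_neg_right, real_inner_self_eq_norm_sq] at hb
  rcases (norm_nonneg w).eq_or_lt with h0 | h0
  · rw [← h0]; exact hε0
  · nlinarith

theorem aux_dir {n : ℕ} {c : Euc n → ℝ} {w zs d : Euc n} {y : ℕ → Euc n} {t : ℕ → ℝ}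
    (hc : HasGradientAt c w zs) (h0 : c zs = 0) (hy : Tendsto y atTop (𝓝 zs))
    (hd : Tendsto (fun k => (t k)⁻¹ • (y k - zs)) atTop (𝓝 d)) :
    Tendsto (fun k => (t k)⁻¹ * c (y k)) atTop (𝓝 ⟪w, d⟫_ℝ) := by
  have := (hasFDerivWithinAt_univ.2 (hasGradientAt_iff_hasFDerivAt.1 hc)).lim
    (d := fun k => y k - zs) (l := atTop) (c := fun k => (t k)⁻¹) (v := d)
    (by simpa using hy.sub_const zs) (by simp) hd
  simpa [h0, InnerProductSpace.toDual_apply_apply] using this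

/-- Slope estimate for the Euclidean penalty. -/
theorem aux_pen {n : ℕ} {ι : Type*} [Fintype ι] {r : ι → Euc n → ℝ} {v : ι → Euc n}
    {y : Euc n} {ε : ℝ} (hε : 0 ≤ ε)
    (hr : ∀ i, HasGradientAt (fun z => (r i z) ^ 2) ((2 * r i y) • v i) y)
    (hpos : 0 < ∑ i, (r i y) ^ 2)
    (hmin : ∀ x, √(∑ i, (r i y) ^ 2) ≤ √(∑ i, (r i x) ^ 2) + ε * ‖x - y‖) :
    ‖∑ i, r i y • v i‖ ≤ ε * √(∑ i, (r i y) ^ 2) := by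
  set S := √(∑ i, (r i y) ^ 2) with hS
  have hSpos : 0 < S := Real.sqrt_pos.2 hpos
  have h1 : HasFDerivAt (fun z => ∑ i, (r i z) ^ 2)
      (∑ i, InnerProductSpace.toDual ℝ (Euc n) ((2 * r i y) • v i)) y :=
    HasFDerivAt.fun_sum fun i _ => hasGradientAt_iff_hasFDerivAt.1 (hr i)
  have h2 := h1.sqrt hpos.ne'
  have h3 : HasGradientAt (fun z => √(∑ i, (r i z) ^ 2)) (S⁻¹ • ∑ i, r i y • v i) y := by
    rw [hasGradientAt_iff_hasFDerivAt]
    have heq : InnerProductSpace.toDual ℝ (Euc n) (S⁻¹ • ∑ i, r i y • v i) =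
        (1 / (2 * S)) • ∑ i, InnerProductSpace.toDual ℝ (Euc n) ((2 * r i y) • v i) := by
      rw [← map_sum]
      ext x
      simp only [InnerProductSpace.toDual_apply_apply, ContinuousLinearMap.smul_apply,
        smul_eq_mul, inner_smul_left, sum_inner, Finset.mul_sum]
      refine Finset.sum_congr rfl fun i _ => ?_
      simp
      field_simp
    rw [heq]
    exact h2
  have h4 := aux_slope hε h3 hmin
  rw [norm_smul, norm_inv, Real.norm_of_nonneg hSpos.le, inv_mul_le_iff₀ hSpos] at h4
  linarith

/-- Extraction of a limiting direction and of limiting multipliers. -/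
theorem aux_extract {n : ℕ} {ι : Type*} [Fintype ι] {r : ι → Euc n → ℝ} {v : ι → Euc n → Euc n}
    (hv : ∀ i, Continuous (v i)) {zs : Euc n}
    (hQ : ∀ ε > (0 : ℝ), ∃ y : Euc n, 0 < ∑ i, (r i y) ^ 2 ∧ ‖y - zs‖ < ε ∧
      √(∑ i, (r i y) ^ 2) ≤ ε * ‖y - zs‖ ∧
      ‖∑ i, r i y • v i y‖ ≤ ε * √(∑ i, (r i y) ^ 2)) :
    ∃ (y : ℕ → Euc n) (d : Euc n) (l : ι → ℝ),
      (∀ k, 0 < ‖y k - zs‖) ∧ Tendsto y atTop (𝓝 zs) ∧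
      Tendsto (fun k => ‖y k - zs‖⁻¹ • (y k - zs)) atTop (𝓝 d) ∧
      (∀ i, Tendsto (fun k => ‖y k - zs‖⁻¹ * r i (y k)) atTop (𝓝 0)) ∧
      (∀ i, Tendsto (fun k => (√(∑ i, (r i (y k)) ^ 2))⁻¹ * r i (y k)) atTop (𝓝 (l i))) ∧
      (∀ k i, l i ≠ 0 → 0 < l i * r i (y k)) ∧
      ∑ i, (l i) ^ 2 = 1 ∧ ∑ i, l i • v i zs = 0 := by
  choose! Y hY1 hY2 hY3 hY4 using hQ
  let e : ℕ → ℝ := fun k => 1 / ((k : ℝ) + 1)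
  have he : ∀ k, 0 < e k := fun k => by positivity
  have het : Tendsto e atTop (𝓝 0) := tendsto_one_div_add_atTop_nhds_zero_nat
  let y0 : ℕ → Euc n := fun k => Y (e k)
  have hS0 : ∀ k, 0 < √(∑ i, (r i (y0 k)) ^ 2) := fun k => Real.sqrt_pos.2 (hY1 _ (he k))
  have hpos0 : ∀ k, 0 < ‖y0 k - zs‖ := fun k =>
    pos_of_mul_pos_right ((hS0 k).trans_le (hY3 _ (he k))) (he k).le
  have hrS : ∀ k i, |r i (y0 k)| ≤ √(∑ i, (r i (y0 k)) ^ 2) := fun k i =>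
    Real.abs_le_sqrt (Finset.single_le_sum (f := fun i => (r i (y0 k)) ^ 2)
      (fun j _ => sq_nonneg _) (Finset.mem_univ i))
  have hy0 : Tendsto y0 atTop (𝓝 zs) := by
    rw [tendsto_iff_norm_sub_tendsto_zero]
    exact squeeze_zero (fun _ => norm_nonneg _) (fun k => (hY2 _ (he k)).le) het
  let D : ℕ → Euc n × (ι → ℝ) := fun k =>
    (‖y0 k - zs‖⁻¹ • (y0 k - zs), fun i => (√(∑ i, (r i (y0 k)) ^ 2))⁻¹ * r i (y0 k))
  have hcpt : IsCompact (Metric.closedBall (0 : Euc n) 1 ×ˢ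
      (Set.pi Set.univ fun _ : ι => Set.Icc (-1 : ℝ) 1)) :=
    (isCompact_closedBall _ _).prod (isCompact_univ_pi fun _ => isCompact_Icc)
  obtain ⟨⟨d, l⟩, -, φ, hφ, hlim⟩ := hcpt.tendsto_subseq (x := D) (by
    intro k
    refine ⟨?_, ?_⟩
    · simp only [D, mem_closedBall_zero_iff, norm_smul, norm_inv, norm_norm]
      rw [inv_mul_cancel₀ (hpos0 k).ne']
    · intro i _
      simp only [D]
      rw [Set.mem_Icc, ← abs_le, abs_mul, abs_inv, abs_of_pos (hS0 k), inv_mul_le_iff₀ (hS0 k), mul_one]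
      exact hrS k i)
  have hd : Tendsto (fun k => (D (φ k)).1) atTop (𝓝 d) :=
    (continuous_fst.tendsto _).comp hlim
  have hl : ∀ i, Tendsto (fun k => (D (φ k)).2 i) atTop (𝓝 (l i)) := fun i =>
    (((continuous_apply i).comp continuous_snd).tendsto _).comp hlim
  have hsign : ∀ᶠ k in atTop, ∀ i, l i ≠ 0 → 0 < l i * r i (y0 (φ k)) := by
    rw [eventually_all]
    intro i
    by_cases hi : l i = 0
    · simp [hi]
    · have h1 : Tendsto (fun k => l i * (D (φ k)).2 i) atTop (𝓝 (l i * l i)) :=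
        (hl i).const_mul _
      have h2 : 0 < l i * l i := mul_self_pos.2 hi
      filter_upwards [h1.eventually (eventually_gt_nhds h2)] with k hk _
      simp only [D] at hk
      rw [mul_left_comm] at hk
      exact pos_of_mul_pos_right hk (inv_pos.2 (hS0 _)).le
  obtain ⟨N, hN⟩ := eventually_atTop.1 hsign
  have hψ : Tendsto (fun k => φ (k + N)) atTop atTop :=
    hφ.tendsto_atTop.comp (tendsto_add_atTop_nat N)
  have hsh : Tendsto (fun k : ℕ => k + N) atTop atTop := tendsto_add_atTop_nat N
  refine ⟨fun k => y0 (φ (k + N)), d, l, fun k => hpos0 _, hy0.comp hψ, hd.comp hsh, ?_,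
    fun i => (hl i).comp hsh, fun k i => hN _ (by omega) i, ?_, ?_⟩
  · intro i
    refine Tendsto.comp (g := fun k => ‖y0 k - zs‖⁻¹ * r i (y0 k)) (f := fun k => φ (k + N)) ?_ hψ
    refine squeeze_zero_norm (fun k => ?_) het
    rw [norm_mul, norm_inv, norm_norm, inv_mul_le_iff₀ (hpos0 k), Real.norm_eq_abs, mul_comm]
    exact (hrS k i).trans (hY3 _ (he k))
  · have h1 : Tendsto (fun k => ∑ i, ((D (φ k)).2 i) ^ 2) atTop (𝓝 (∑ i, (l i) ^ 2)) :=
      tendsto_finsetSum _ fun i _ => (hl i).pow 2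
    refine tendsto_nhds_unique h1 (tendsto_const_nhds.congr fun k => ?_)
    simp only [D, mul_pow, ← Finset.mul_sum, inv_pow]
    rw [Real.sq_sqrt (hY1 _ (he _)).le, inv_mul_cancel₀ (hY1 _ (he _)).ne']
  · have h1 : Tendsto (fun k => ∑ i, (D (φ k)).2 i • v i (y0 (φ k))) atTop
        (𝓝 (∑ i, l i • v i zs)) :=
      tendsto_finsetSum _ fun i _ => (hl i).smul
        (((hv i).tendsto zs).comp (hy0.comp hφ.tendsto_atTop))
    refine tendsto_nhds_unique h1 ?_
    refine squeeze_zero_norm (fun k => ?_) (het.comp hφ.tendsto_atTop)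
    simp only [D, mul_smul, ← Finset.smul_sum]
    rw [norm_smul, norm_inv, Real.norm_of_nonneg (hS0 _).le, inv_mul_le_iff₀ (hS0 _), mul_comm]
    exact hY4 _ (he _)

theorem aux_sq_grad {n : ℕ} {c : Euc n → ℝ} {w y : Euc n} (hc : HasGradientAt c w y) :
    HasGradientAt (fun z => (c z) ^ 2) ((2 * c y) • w) y := by
  rw [hasGradientAt_iff_hasFDerivAt] at hc ⊢
  have h0 : HasDerivAt (fun x : ℝ => x ^ 2) (2 * c y) (c y) := by
    simpa using hasDerivAt_pow 2 (c y)
  have h := h0.comp_hasFDerivAt y hc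
  rw [map_smul]
  exact h

theorem aux_max_grad {n : ℕ} {c : Euc n → ℝ} {w y : Euc n} (hc : HasGradientAt c w y) :
    HasGradientAt (fun z => (max (c z) 0) ^ 2) ((2 * max (c y) 0) • w) y := by
  rw [hasGradientAt_iff_hasFDerivAt] at hc ⊢
  have h := (aux_max_sq (c y)).comp_hasFDerivAt y hc
  rw [map_smul]
  exact h

namespace MPSC

variable {n p q m : ℕ} (P : MPSC n p q m)

/-- The selected residual functions. -/
def rr (s : Fin m → Bool) : Fin p ⊕ Fin q ⊕ Fin m → Euc n → ℝ
  | .inl i => fun z => max (P.g i z) 0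
  | .inr (.inl j) => P.h j
  | .inr (.inr i) => if s i then P.G i else P.H i

/-- The corresponding gradients. -/
def vv (s : Fin m → Bool) : Fin p ⊕ Fin q ⊕ Fin m → Euc n → Euc n
  | .inl i => P.g' i
  | .inr (.inl j) => P.h' j
  | .inr (.inr i) => if s i then P.G' i else P.H' i

/-- The Euclidean residual. -/
def psi (z : Euc n) : ℝ :=
  √((∑ i, (max (P.g i z) 0) ^ 2) + (∑ j, (P.h j z) ^ 2) + ∑ i, (min |P.G i z| |P.H i z|) ^ 2)

theorem cont_g (i) : Continuous (P.g i) :=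
  continuous_iff_continuousAt.2 fun z => (P.grad_g i z).differentiableAt.continuousAt
theorem cont_h (i) : Continuous (P.h i) :=
  continuous_iff_continuousAt.2 fun z => (P.grad_h i z).differentiableAt.continuousAt
theorem cont_G (i) : Continuous (P.G i) :=
  continuous_iff_continuousAt.2 fun z => (P.grad_G i z).differentiableAt.continuousAt
theorem cont_H (i) : Continuous (P.H i) :=
  continuous_iff_continuousAt.2 fun z => (P.grad_H i z).differentiableAt.continuousAt

theorem psi_cont : Continuous P.psi := by
  have h1 := P.cont_g
  have h2 := P.cont_h
  have h3 := P.cont_G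
  have h4 := P.cont_H
  unfold psi
  refine Real.continuous_sqrt.comp ((Continuous.add ?_ ?_).add ?_)
  · exact continuous_finsetSum _ fun i _ => ((h1 i).max continuous_const).pow 2
  · exact continuous_finsetSum _ fun i _ => (h2 i).pow 2
  · exact continuous_finsetSum _ fun i _ => ((h3 i).abs.min (h4 i).abs).pow 2

theorem psi_nonneg (z) : 0 ≤ P.psi z := Real.sqrt_nonneg _

theorem psi_le_residual (z) : P.psi z ≤ P.residual z := by
  have a1 : 0 ≤ ∑ i, max (P.g i z) 0 := Finset.sum_nonneg fun i _ => le_max_right _ _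
  have a2 : 0 ≤ ∑ j, |P.h j z| := Finset.sum_nonneg fun i _ => abs_nonneg _
  have hm : ∀ i, 0 ≤ min |P.G i z| |P.H i z| := fun i => le_min (abs_nonneg _) (abs_nonneg _)
  have a3 : 0 ≤ ∑ i, min |P.G i z| |P.H i z| := Finset.sum_nonneg fun i _ => hm i
  have b1 : ∑ i, (max (P.g i z) 0) ^ 2 ≤ (∑ i, max (P.g i z) 0) ^ 2 :=
    Finset.sum_sq_le_sq_sum_of_nonneg fun i _ => le_max_right _ _
  have b2 : ∑ j, |P.h j z| ^ 2 ≤ (∑ j, |P.h j z|) ^ 2 :=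
    Finset.sum_sq_le_sq_sum_of_nonneg fun i _ => abs_nonneg _
  have b3 : ∑ i, (min |P.G i z| |P.H i z|) ^ 2 ≤ (∑ i, min |P.G i z| |P.H i z|) ^ 2 :=
    Finset.sum_sq_le_sq_sum_of_nonneg fun i _ => hm i
  simp only [sq_abs] at b2
  unfold psi residual
  refine Real.sqrt_le_iff.2 ⟨by positivity, ?_⟩
  nlinarith [mul_nonneg a1 a2, mul_nonneg a1 a3, mul_nonneg a2 a3]

theorem sum_rr (s : Fin m → Bool) (z) : ∑ i, (P.rr s i z) ^ 2 =
    (∑ i, (max (P.g i z) 0) ^ 2) + (∑ j, (P.h j z) ^ 2) +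
      ∑ i, ((if s i then P.G i else P.H i) z) ^ 2 := by
  simp only [Fintype.sum_sum_type, rr, add_assoc]

theorem psi_le_rr (s : Fin m → Bool) (z) : P.psi z ≤ √(∑ i, (P.rr s i z) ^ 2) := by
  rw [sum_rr]
  unfold psi
  refine Real.sqrt_le_sqrt (add_le_add le_rfl (Finset.sum_le_sum fun i _ => ?_))
  have h0 : 0 ≤ min |P.G i z| |P.H i z| := le_min (abs_nonneg _) (abs_nonneg _)
  split_ifs
  · rw [← sq_abs (P.G i z)]
    exact pow_le_pow_left₀ h0 (min_le_left _ _) 2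
  · rw [← sq_abs (P.H i z)]
    exact pow_le_pow_left₀ h0 (min_le_right _ _) 2

theorem exists_sel (z) : ∃ s : Fin m → Bool, √(∑ i, (P.rr s i z) ^ 2) = P.psi z := by
  refine ⟨fun i => decide (|P.G i z| ≤ |P.H i z|), ?_⟩
  rw [sum_rr]
  unfold psi
  congr 2
  refine Finset.sum_congr rfl fun i _ => ?_
  by_cases h : |P.G i z| ≤ |P.H i z|
  · simp [h]
  · simp [h, min_eq_right (not_le.1 h).le]

theorem psi_pos {z} (hz : z ∉ P.Feas) : 0 < P.psi z := by
  refine lt_of_le_of_ne (P.psi_nonneg z) fun h0 => hz ?_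
  have a1 : 0 ≤ ∑ i, (max (P.g i z) 0) ^ 2 := Finset.sum_nonneg fun i _ => sq_nonneg _
  have a2 : 0 ≤ ∑ j, (P.h j z) ^ 2 := Finset.sum_nonneg fun i _ => sq_nonneg _
  have a3 : 0 ≤ ∑ i, (min |P.G i z| |P.H i z|) ^ 2 := Finset.sum_nonneg fun i _ => sq_nonneg _
  have h := (Real.sqrt_eq_zero (by positivity)).1 h0.symm
  have c1 : ∑ i, (max (P.g i z) 0) ^ 2 = 0 := by linarith
  have c2 : ∑ j, (P.h j z) ^ 2 = 0 := by linarith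
  have c3 : ∑ i, (min |P.G i z| |P.H i z|) ^ 2 = 0 := by linarith
  rw [Finset.sum_eq_zero_iff_of_nonneg fun i _ => sq_nonneg _] at c1 c2 c3
  refine ⟨fun i => ?_, fun j => ?_, fun i => ?_⟩
  · have := c1 i (Finset.mem_univ i)
    exact max_eq_right_iff.1 (pow_eq_zero_iff (two_ne_zero)|>.1 this)
  · simpa using c2 j (Finset.mem_univ j)
  · have := pow_eq_zero_iff (two_ne_zero)|>.1 (c3 i (Finset.mem_univ i))
    rcases min_choice |P.G i z| |P.H i z| with h | h <;> rw [h] at this <;>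
      rw [abs_eq_zero] at this <;> simp [this]

theorem rr_grad (s : Fin m → Bool) (i) (y) :
    HasGradientAt (fun z => (P.rr s i z) ^ 2) ((2 * P.rr s i y) • P.vv s i y) y := by
  rcases i with i | j | i
  · exact aux_max_grad (P.grad_g i y)
  · exact aux_sq_grad (P.grad_h j y)
  · refine aux_sq_grad ?_
    simp only [rr, vv]
    split_ifs
    · exact P.grad_G i y
    · exact P.grad_H i y

theorem vv_cont (s : Fin m → Bool) (i) : Continuous (P.vv s i) := by
  rcases i with i | j | i
  · exact P.cont_g' i
  · exact P.cont_h' j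
  · simp only [vv]
    split_ifs
    · exact P.cont_G' i
    · exact P.cont_H' i

/-- The approximate stationarity property extracted from failure of the error bound. -/
def QQ (zs : Euc n) (s : Fin m → Bool) (ε : ℝ) (y : Euc n) : Prop :=
  0 < ∑ i, (P.rr s i y) ^ 2 ∧ ‖y - zs‖ < ε ∧
      √(∑ i, (P.rr s i y) ^ 2) ≤ ε * ‖y - zs‖ ∧
      ‖∑ i, P.rr s i y • P.vv s i y‖ ≤ ε * √(∑ i, (P.rr s i y) ^ 2)

theorem exists_QQ {zs : Euc n} (hfeas : zs ∈ P.Feas) (hne : ¬ P.ErrorBound zs) {ε : ℝ}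
    (hε : 0 < ε) : ∃ s y, P.QQ zs s ε y := by
  unfold ErrorBound at hne
  push Not at hne
  obtain ⟨z, hz, hlt⟩ := hne _ (Metric.ball_mem_nhds zs (half_pos hε)) (2 / ε) (by positivity)
  set D := Metric.infDist z P.Feas with hD
  have hDz : D ≤ ‖z - zs‖ := by
    rw [← dist_eq_norm]; exact Metric.infDist_le_dist_of_mem hfeas
  rw [mem_ball_iff_norm] at hz
  have hψz : P.psi z < ε * D / 2 := by
    have h1 : 2 / ε * P.psi z < D :=
      (mul_le_mul_of_nonneg_left (P.psi_le_residual z) (by positivity)).trans_lt hlt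
    have h2 := mul_lt_mul_of_pos_left h1 hε
    have h3 : ε * (2 / ε * P.psi z) = 2 * P.psi z := by field_simp
    linarith
  have hcont : Continuous fun x => P.psi x + ε * ‖x - z‖ :=
    P.psi_cont.add (continuous_const.mul (continuous_id.sub continuous_const).norm)
  obtain ⟨y, hy⟩ := hcont.exists_forall_le_of_isBounded z (by
    refine (Metric.isBounded_closedBall (x := z) (r := P.psi z / ε)).subset fun x hx => ?_
    have hx' : P.psi x + ε * ‖x - z‖ ≤ P.psi z + ε * ‖z - z‖ := hx
    rw [sub_self, norm_zero, mul_zero] at hx'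
    rw [mem_closedBall_iff_norm, le_div_iff₀ hε]
    linarith [P.psi_nonneg x])
  have hyz := hy z
  simp only [sub_self, norm_zero, mul_zero, add_zero] at hyz
  have hn : ‖y - z‖ < D / 2 := by
    by_contra hcon
    push Not at hcon
    have := mul_le_mul_of_nonneg_left hcon hε.le
    linarith [P.psi_nonneg y]
  have hyF : y ∉ P.Feas := fun hyF => by
    have h1 := Metric.infDist_le_dist_of_mem (x := z) hyF
    rw [dist_comm, dist_eq_norm] at h1
    linarith [norm_nonneg (y - z)]
  have hpos := P.psi_pos hyF
  have htri : ‖z - zs‖ ≤ ‖y - z‖ + ‖y - zs‖ := by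
    rw [norm_sub_rev y z]; exact norm_sub_le_norm_sub_add_norm_sub z y zs
  have htri2 : ‖y - zs‖ ≤ ‖y - z‖ + ‖z - zs‖ := norm_sub_le_norm_sub_add_norm_sub y z zs
  obtain ⟨s, hs⟩ := P.exists_sel y
  refine ⟨s, y, Real.sqrt_pos.1 (hs ▸ hpos), by linarith, ?_, ?_⟩
  · rw [hs]
    have : D / 2 ≤ ‖y - zs‖ := by linarith
    have := mul_le_mul_of_nonneg_left this hε.le
    have := mul_nonneg hε.le (norm_nonneg (y - z))
    linarith
  · refine aux_pen hε.le (fun i => P.rr_grad s i y) (Real.sqrt_pos.1 (hs ▸ hpos)) fun x => ?_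
    rw [hs]
    have h1 := hy x
    have h2 : ‖x - z‖ ≤ ‖x - y‖ + ‖y - z‖ := norm_sub_le_norm_sub_add_norm_sub x y z
    have h3 := mul_le_mul_of_nonneg_left h2 hε.le
    have h4 := P.psi_le_rr s x
    linarith

theorem exists_sel_QQ {zs : Euc n} (hfeas : zs ∈ P.Feas) (hne : ¬ P.ErrorBound zs) :
    ∃ s, ∀ ε > 0, ∃ y, P.QQ zs s ε y := by
  by_contra hcon
  push Not at hcon
  choose e he hno using hcon
  obtain ⟨s, y, h1, h2, h3, h4⟩ := P.exists_QQ hfeas hne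
    (ε := Finset.univ.inf' ⟨fun _ => true, Finset.mem_univ _⟩ e)
    ((Finset.lt_inf'_iff _).2 fun s _ => he s)
  have hle : Finset.univ.inf' ⟨fun _ => true, Finset.mem_univ _⟩ e ≤ e s :=
    Finset.inf'_le _ (Finset.mem_univ s)
  exact hno s y ⟨h1, h2.trans_le hle, h3.trans (by gcongr), h4.trans (by gcongr)⟩

end MPSC

/-- MPSC directional quasi-normality implies the MPSC local error bound. -/
theorem mpsc_dirQuasiNormal_errorBound {n p q m : ℕ} (P : MPSC n p q m) (zs : Euc n)
    (hfeas : zs ∈ P.Feas) (hqn : P.DirQuasiNormal zs) :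
    P.ErrorBound zs := by
  by_contra hne
  obtain ⟨s, hs⟩ := P.exists_sel_QQ hfeas hne
  obtain ⟨y, d, l, hpos, hy, hd, hr, hl, hsign, hone, hzero⟩ :=
    aux_extract (P.vv_cont s) (zs := zs) hs
  have ht : Tendsto (fun k => ‖y k - zs‖) atTop (𝓝 0) :=
    (tendsto_iff_norm_sub_tendsto_zero).1 hy
  have hr0 : ∀ i, Tendsto (fun k => P.rr s i (y k)) atTop (𝓝 0) := fun i => by
    have := ht.mul (hr i)
    rw [mul_zero] at this
    refine this.congr fun k => ?_
    rw [mul_inv_cancel_left₀ (hpos k).ne']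
  -- selected switching functions
  have hG : ∀ i, s i = true → P.G i zs = 0 ∧ ⟪P.G' i zs, d⟫_ℝ = 0 := fun i hi => by
    have h1 := hr0 (.inr (.inr i))
    have h2 := hr (.inr (.inr i))
    simp only [MPSC.rr, hi, if_true] at h1 h2
    have h0 : P.G i zs = 0 := tendsto_nhds_unique (((P.cont_G i).tendsto zs).comp hy) h1
    exact ⟨h0, tendsto_nhds_unique (aux_dir (P.grad_G i zs) h0 hy hd) h2⟩
  have hH : ∀ i, s i = false → P.H i zs = 0 ∧ ⟪P.H' i zs, d⟫_ℝ = 0 := fun i hi => by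
    have h1 := hr0 (.inr (.inr i))
    have h2 := hr (.inr (.inr i))
    simp only [MPSC.rr, hi, Bool.false_eq_true, if_false] at h1 h2
    have h0 : P.H i zs = 0 := tendsto_nhds_unique (((P.cont_H i).tendsto zs).comp hy) h1
    exact ⟨h0, tendsto_nhds_unique (aux_dir (P.grad_H i zs) h0 hy hd) h2⟩
  have hgle : ∀ i ∈ P.Ig zs, ⟪P.g' i zs, d⟫_ℝ ≤ 0 := fun i hi =>
    le_of_tendsto_of_tendsto' (aux_dir (P.grad_g i zs) hi hy hd) (hr (.inl i)) fun k =>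
      mul_le_mul_of_nonneg_left (le_max_left _ _) (inv_pos.2 (hpos k)).le
  have hdL : d ∈ P.LinCone zs := by
    refine ⟨hgle, fun j => ?_, fun i hi => ?_, fun i hi => ?_, fun i hi => ?_⟩
    · exact tendsto_nhds_unique (aux_dir (P.grad_h j zs) (hfeas.2.1 j) hy hd) (hr (.inr (.inl j)))
    · cases h : s i
      · exact absurd (hH i h).1 hi.2
      · exact (hG i h).2
    · cases h : s i
      · exact (hH i h).2
      · exact absurd (hG i h).1 hi.1
    · cases h : s i
      · rw [(hH i h).2, mul_zero]
      · rw [(hG i h).2, zero_mul]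
  -- inequality multipliers
  have hg0 : ∀ i, 0 ≤ l (.inl i) := fun i =>
    ge_of_tendsto' (hl (.inl i)) fun k =>
      mul_nonneg (inv_nonneg.2 (Real.sqrt_nonneg _)) (le_max_right _ _)
  have hgpos : ∀ i, l (.inl i) ≠ 0 → ∀ k, 0 < P.g i (y k) := fun i hi k => by
    have h1 := pos_of_mul_pos_right (hsign k _ hi) (hg0 i)
    simp only [MPSC.rr] at h1
    by_contra hc
    rw [max_eq_right (not_lt.1 hc)] at h1
    exact lt_irrefl _ h1
  have hgout : ∀ i ∉ P.Igd zs d, l (.inl i) = 0 := fun i hi => by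
    by_contra hne
    apply hi
    have hp := hgpos i hne
    have h0 : P.g i zs = 0 := le_antisymm (hfeas.1 i)
      (ge_of_tendsto' (((P.cont_g i).tendsto zs).comp hy) fun k => (hp k).le)
    exact ⟨h0, le_antisymm (hgle i h0)
      (ge_of_tendsto' (aux_dir (P.grad_g i zs) h0 hy hd) fun k =>
        mul_nonneg (inv_nonneg.2 (norm_nonneg _)) (hp k).le)⟩
  have hyk : ∀ k, zs + ‖y k - zs‖ • (‖y k - zs‖⁻¹ • (y k - zs)) = y k := fun k => by
    rw [smul_inv_smul₀ (hpos k).ne', add_sub_cancel]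
  obtain ⟨e1, e2, e3, e4⟩ := hqn d hdL (fun i => l (.inl i)) (fun j => l (.inr (.inl j)))
    (fun i => if s i then l (.inr (.inr i)) else 0)
    (fun i => if s i then 0 else l (.inr (.inr i)))
    (by
      rw [← hzero]
      simp only [Fintype.sum_sum_type, MPSC.vv, add_assoc]
      congr 2
      refine Finset.sum_congr rfl fun i _ => ?_
      cases s i <;> simp)
    (by
      refine ⟨fun i _ => hg0 i, hgout, fun i hi => ?_, fun i hi => ?_, fun i _ => ?_⟩
      · cases h : s i
        · rcases hi with hi | hi
          · exact absurd (hH i h).1 hi.2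
          · exact absurd (hH i h).2 hi.2.2
        · simp
      · cases h : s i
        · simp
        · rcases hi with hi | hi
          · exact absurd (hG i h).1 hi.1
          · exact absurd (hG i h).2 hi.2.1
      · cases s i <;> simp)
    (by
      refine ⟨fun k => ‖y k - zs‖⁻¹ • (y k - zs), fun k => ‖y k - zs‖, hd, hpos, ht, fun k => ?_⟩
      rw [hyk k]
      refine ⟨fun i hi => ?_, fun j hj => hsign k _ hj, fun i hi => ?_, fun i hi => ?_⟩
      · exact mul_pos (lt_of_le_of_ne (hg0 i) (Ne.symm hi)) (hgpos i hi k)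
      · cases h : s i
        · simp [h] at hi
        · simp only [h, if_true] at hi ⊢
          simpa [MPSC.rr, h] using hsign k _ hi
      · cases h : s i
        · simp only [h, Bool.false_eq_true, if_false] at hi ⊢
          simpa [MPSC.rr, h] using hsign k _ hi
        · simp [h] at hi)
  have hl0 : ∀ i, l i = 0 := by
    rintro (i | j | i)
    · exact congrFun e1 i
    · exact congrFun e2 j
    · cases h : s i
      · simpa [h] using congrFun e4 i
      · simpa [h] using congrFun e3 i
  simp [hl0] at hone
end
end
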